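/- arXiv:2605.02304 — 3 statements merged into one kernel-verified Lean document; each statement's English description precedes it below -/
import Mathlib

section
/- Let F be a τ^[d]-closed subgroup of G = uM. Then H_{τ^[d]}(F), defined as the intersection of cl_{τ^[d]}(V) over all τ^[d]-open neighborhoods V of the identity u in F, is a τ^[d]-closed subgroup of F. -/
attribute [local instance] Ultrafilter.mul Ultrafilter.semigroup

/-- Nonempty subsets of `[d]`: the starred coordinates of the `d`-cube. -/
def CubeStar (d : ℕ) : Type := {ε : Finset (Fin d) // ε.Nonempty}

/-- The starred face cube group of order `d` of the group `T`. -/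
def faceGroupStar (T : Type*) [Group T] (d : ℕ) : Subgroup (CubeStar d → T) :=
  Subgroup.closure {f | ∃ t : T, ∃ j : Fin d, f = fun ε => if j ∈ ε.1 then t else 1}

/-- `M` is a minimal left ideal of the semigroup `βT`. -/
def IsMinimalLeftIdeal {T : Type*} [Group T] (M : Set (Ultrafilter T)) : Prop :=
  (M.Nonempty ∧ ∀ p ∈ M, ∀ q : Ultrafilter T, q * p ∈ M) ∧
    ∀ N ⊆ M, (N.Nonempty ∧ ∀ p ∈ N, ∀ q : Ultrafilter T, q * p ∈ N) → N = M

/-- The circle operation `u^[d]_* ∘ B` for the face group acting on `(βT)^{2^d-1}`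
by left multiplication. -/
def circOpM {T : Type*} [Group T] (d : ℕ) (u : Ultrafilter T)
    (B : Set (CubeStar d → Ultrafilter T)) : Set (CubeStar d → Ultrafilter T) :=
  {z | (((fun _ => u) : CubeStar d → Ultrafilter T), z) ∈ closure
    {q : (CubeStar d → Ultrafilter T) × (CubeStar d → Ultrafilter T) |
      ∃ f ∈ faceGroupStar T d, ∃ b ∈ B,
        q = (fun ε => (pure (f ε) : Ultrafilter T), fun ε => (pure (f ε) : Ultrafilter T) * b ε)}}

/-- The `τ^[d]`-closure of a subset `A` of `G = uM`:
`cl(A) = {g ∈ G : g^[d]_* ∈ u^[d]_*(u^[d]_* ∘ Δ^[d]_*(A))}`. -/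
def clTauG {T : Type*} [Group T] (d : ℕ) (M : Set (Ultrafilter T)) (u : Ultrafilter T)
    (A : Set (Ultrafilter T)) : Set (Ultrafilter T) :=
  {g | g ∈ (fun p => u * p) '' M ∧
    (fun _ : CubeStar d => g) ∈
      (fun z : CubeStar d → Ultrafilter T => fun ε => u * z ε) ''
        circOpM d u ((fun a : Ultrafilter T => fun _ : CubeStar d => a) '' A)}


/-- The derived set `H_{τ^[d]}(F)`: the intersection of the `τ^[d]`-closures of the
`τ^[d]`-open neighborhoods of the identity `u` in `F`. -/
def Htau {T : Type*} [Group T] (d : ℕ) (M : Set (Ultrafilter T)) (u : Ultrafilter T)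
    (F : Set (Ultrafilter T)) : Set (Ultrafilter T) :=
  ⋂₀ {C | ∃ V : Set (Ultrafilter T),
    (V ⊆ F ∧ u ∈ V ∧ clTauG d M u (F \ V) = F \ V) ∧ C = clTauG d M u V}

/-! An element of `F` lies in `H(F)` iff it is a cluster point of the `τ^[d]`-neighbourhoods of the
identity, i.e. iff a single ultrafilter on `F` converges both to it and to `u`. Right translations
of `F` are `τ^[d]`-continuous, so translating such an ultrafilter by the inverse gives closure under
inversion, while `h V ⊆ cl V` for every `h ∈ H(F)` and every open `V ∋ u`. Closure under products
follows once left translation by `h` is continuous too, and for this it suffices that the diagonals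
of `h` and `h⁻¹` lie in the closure `E` of the face group in `(βT)^{2^d-1}`.

To see that they do, let the ultrafilter converge to `b` in `βT` and put `c = ub ∈ F`. Multiplying
limits of face translates along the faces of the cube shows that the diagonals of `c` and `c h⁻¹`
are in `E`. The Ellis–Namakura theorem and the minimality of `M` show that the elements of `F` with
diagonal in `E` are closed under inversion, so `h = (c h⁻¹)⁻¹ c` is one of them. -/

open Set Filter Topology

namespace TauTopology

section ClusterPoints

variable {G : Type*} [TopologicalSpace G]

theorem clusterPt_inv_nhds_one [Group G] {h : G} (hr : Continuous (· * h⁻¹))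
    (hh : ClusterPt h (𝓝 1)) : ClusterPt h⁻¹ (𝓝 1) := by
  have hmap := hh.map hr.continuousAt (hr.tendsto 1)
  simp only [mul_inv_cancel, one_mul] at hmap
  rwa [ClusterPt, inf_comm]

theorem mul_mem_closure_of_clusterPt_nhds_one [MulOneClass G] {h x : G} (hr : Continuous (· * x))
    (hh : ClusterPt h (𝓝 1)) {V : Set G} (hV : V ∈ 𝓝 x) : h * x ∈ closure V := by
  have hpre : (· * x) ⁻¹' V ∈ 𝓝 1 := hr.continuousAt.preimage_mem_nhds (by simpa using hV)
  exact (mapsTo_preimage _ V).closure hr (hh.mem_closure_of_mem _ hpre)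

theorem clusterPt_mul_nhds_one [MulOneClass G] (hr : ∀ x : G, Continuous (· * x)) {h k : G}
    (hl : Continuous (h * ·)) (hh : ClusterPt h (𝓝 1)) (hk : ClusterPt k (𝓝 1)) :
    ClusterPt (h * k) (𝓝 1) := by
  refine (nhds_basis_opens 1).clusterPt_iff_forall_mem_closure.2 fun V ⟨h1V, hV⟩ => ?_
  have hmaps : MapsTo (h * ·) V (closure V) := fun x hx =>
    mul_mem_closure_of_clusterPt_nhds_one (hr x) hh (hV.mem_nhds hx)
  exact hmaps.closure_left hl isClosed_closure (hk.mem_closure_of_mem _ (hV.mem_nhds h1V))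

end ClusterPoints

theorem prodMk_mem_closure_of_tendsto {ι L Y Z : Type*} [TopologicalSpace Y] [TopologicalSpace Z]
    {l : Filter ι} {φ : ι → Z} {b : Z} (hφ : Tendsto φ l (𝓝 b)) {r : L → ι → Y} {Λ : Set L} {y : Y}
    (hy : ∀ s ∈ l, y ∈ closure (image2 r Λ s)) :
    (y, b) ∈ closure (image2 (fun f i => (r f i, φ i)) Λ univ) := by
  refine mem_closure_iff_nhds.2 fun N hN => ?_
  obtain ⟨V, hV, W, hW, hVW⟩ := mem_nhds_prod_iff.1 hN
  obtain ⟨_, hxV, f, hf, i, hi, rfl⟩ := mem_closure_iff_nhds.1 (hy _ (hφ hW)) V hV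
  exact ⟨(r f i, φ i), hVW ⟨hxV, hi⟩, f, hf, i, mem_univ i, rfl⟩

section RightTopologicalSemigroup

variable {X : Type*} [Semigroup X] [TopologicalSpace X]

/-- The graph of the left action of `Λ` restricted to the points of `B`: the pairs `(l, l * b)`. -/
def actionGraph (Λ : Subsemigroup X) (B : Set X) : Set (X × X) :=
  image2 (fun l b => (l, l * b)) Λ B

/-- The circle operation `p ∘ B`: the limits of nets `lᵢ * bᵢ` with `lᵢ ∈ Λ`, `lᵢ → p` and
`bᵢ ∈ B`. -/
def circ (Λ : Subsemigroup X) (p : X) (B : Set X) : Set X :=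
  {z | (p, z) ∈ closure (actionGraph Λ B)}

variable {Λ : Subsemigroup X} {p q s z b k : X} {B C : Set X}

theorem circ_empty : circ Λ p ∅ = ∅ := by
  simp [circ, actionGraph]

theorem circ_union : circ Λ p (B ∪ C) = circ Λ p B ∪ circ Λ p C := by
  ext z
  simp only [circ, actionGraph, image2_union_right, closure_union, mem_union, mem_ofPred_eq]

theorem circ_mono (h : B ⊆ C) : circ Λ p B ⊆ circ Λ p C :=
  fun _ hz => closure_mono (image2_subset_left h) hz

theorem isClosed_circ : IsClosed (circ Λ p B) :=
  isClosed_closure.preimage (Continuous.prodMk_right p)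

theorem mul_mem_circ (hr : Continuous (· * b)) (hp : p ∈ closure (Λ : Set X)) (hb : b ∈ B) :
    p * b ∈ circ Λ p B := by
  have hmaps : MapsTo (fun x => (x, x * b)) (Λ : Set X) (actionGraph Λ B) :=
    fun l hl => mem_image2_of_mem hl hb
  exact hmaps.closure (continuous_id.prodMk hr) hp

theorem mul_mem_circ_image_mul_right (hr : Continuous (· * k)) (hz : z ∈ circ Λ p B) :
    z * k ∈ circ Λ p ((· * k) '' B) := by
  have hmaps : MapsTo (Prod.map id (· * k)) (actionGraph Λ B) (actionGraph Λ ((· * k) '' B)) := by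
    rintro _ ⟨l, hl, b, hb, rfl⟩
    exact ⟨l, hl, b * k, mem_image_of_mem _ hb, Prod.ext rfl (mul_assoc l b k).symm⟩
  exact hmaps.closure (continuous_id.prodMap hr) hz

theorem mul_mem_closure_subsemigroup (hl : ∀ l ∈ Λ, Continuous (l * ·))
    (hr : Continuous (· * q)) (hp : p ∈ closure (Λ : Set X)) (hq : q ∈ closure (Λ : Set X)) :
    p * q ∈ closure (Λ : Set X) := by
  have hmaps : MapsTo (· * q) (Λ : Set X) (closure (Λ : Set X)) := fun l hlΛ =>
    MapsTo.closure (s := (Λ : Set X)) (fun _ hm => mul_mem hlΛ hm) (hl l hlΛ) hq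
  exact hmaps.closure_left hr isClosed_closure hp

theorem circ_circ_subset (hl : ∀ l ∈ Λ, Continuous (l * ·)) (hr : Continuous (· * q)) :
    circ Λ p (circ Λ q B) ⊆ circ Λ (p * q) B := by
  have htranslate : ∀ l ∈ Λ,
      MapsTo (Prod.map (l * ·) (l * ·)) (actionGraph Λ B) (actionGraph Λ B) := by
    rintro l hlΛ _ ⟨m, hm, b, hb, rfl⟩
    exact ⟨l * m, mul_mem hlΛ hm, b, hb, Prod.ext rfl (mul_assoc l m b)⟩
  have hmaps : MapsTo (Prod.map (· * q) id) (actionGraph Λ (circ Λ q B))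
      (closure (actionGraph Λ B)) := by
    rintro _ ⟨l, hlΛ, b, hb, rfl⟩
    exact (htranslate l hlΛ).closure ((hl l hlΛ).prodMap (hl l hlΛ)) hb
  exact fun z hz => hmaps.closure_left (hr.prodMap continuous_id) isClosed_closure hz

theorem mul_mem_circ_mul (hl : ∀ l ∈ Λ, Continuous (l * ·)) (hr : ∀ x : X, Continuous (· * x))
    (hs : s ∈ closure (Λ : Set X)) (hz : z ∈ circ Λ p B) : s * z ∈ circ Λ (s * p) B :=
  circ_circ_subset hl (hr p) (mul_mem_circ (hr z) hs hz)

theorem circ_subset_circ_mul_image {s' : X} (hl : ∀ l ∈ Λ, Continuous (l * ·))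
    (hr : ∀ x : X, Continuous (· * x)) (hs' : s' ∈ closure (Λ : Set X))
    (hcancel : ∀ b ∈ B, s' * (s * b) = b) : circ Λ p B ⊆ circ Λ (p * s') ((s * ·) '' B) := by
  have hB : B ⊆ circ Λ s' ((s * ·) '' B) := fun b hb => by
    simpa only [hcancel b hb] using mul_mem_circ (hr _) hs' (mem_image_of_mem (s * ·) hb)
  exact (circ_mono hB).trans (circ_circ_subset hl (hr s'))

/-- By Ellis–Namakura `E * s` contains an idempotent `v = p * s`; then `e * v = e` forces
`s' = e * p * e`. -/
theorem inverse_mem_of_isCompact [T2Space X] (hr : ∀ x : X, Continuous (· * x)) {E : Set X}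
    (hE : IsCompact E) (hmul : ∀ x ∈ E, ∀ y ∈ E, x * y ∈ E) {e s s' : X} (he : e ∈ E) (hs : s ∈ E)
    (hss' : s * s' = e) (hes' : e * s' = s')
    (hidem : ∀ p, IsIdempotentElem (p * s) → e * (p * s) = e) : s' ∈ E := by
  obtain ⟨_, ⟨p, hp, rfl⟩, hv⟩ := exists_idempotent_in_compact_subsemigroup hr ((· * s) '' E)
    ⟨_, mem_image_of_mem _ hs⟩ (hE.image (hr s)) (by
      rintro _ ⟨x, hx, rfl⟩ _ ⟨y, hy, rfl⟩
      exact ⟨x * s * y, hmul _ (hmul x hx s hs) y hy, mul_assoc _ _ _⟩)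
  have hs' : s' = e * p * e := calc
    s' = e * (p * s) * s' := by rw [hidem p hv, hes']
    _ = e * p * e := by simp only [mul_assoc, hss']
  rw [hs']
  exact hmul _ (hmul e he p hp) e he

end RightTopologicalSemigroup

section UltrafilterSemigroup

variable {T : Type*}

theorem continuous_pure_mul [Mul T] (t : T) :
    Continuous fun p : Ultrafilter T => (pure t : Ultrafilter T) * p :=
  ultrafilterBasis_is_basis.continuous_iff.2 <| forall_mem_range.mpr fun s =>
    ultrafilter_isOpen_basic {m : T | t * m ∈ s}

theorem pure_one_mul [MulOneClass T] (p : Ultrafilter T) : (pure 1 : Ultrafilter T) * p = p := by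
  refine Ultrafilter.coe_inj.mp (Filter.ext' fun P => ?_)
  simp [Ultrafilter.eventually_mul]

theorem mul_pure_one [MulOneClass T] (p : Ultrafilter T) : p * (pure 1 : Ultrafilter T) = p := by
  refine Ultrafilter.coe_inj.mp (Filter.ext' fun P => ?_)
  simp [Ultrafilter.eventually_mul]

theorem mul_idempotent_of_isMinimalLeftIdeal [Group T] {M : Set (Ultrafilter T)}
    (hM : IsMinimalLeftIdeal M) {m v : Ultrafilter T} (hv : v ∈ M) (hvv : IsIdempotentElem v)
    (hm : m ∈ M) : m * v = m := by
  have hrange : range (· * v) = M := by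
    refine hM.2 _ ?_ ⟨⟨_, mem_range_self v⟩, ?_⟩
    · rintro _ ⟨q, rfl⟩
      exact hM.1.2 v hv q
    · rintro _ ⟨q, rfl⟩ r
      exact ⟨r * q, mul_assoc r q v⟩
  obtain ⟨q, rfl⟩ := hrange ▸ hm
  exact (mul_assoc q v v).trans (congrArg (q * ·) hvv)

end UltrafilterSemigroup

section CubeVectors

variable {d : ℕ} {α β : Type*}

/-- The vector with entry `x` at the vertices meeting `J` and `y` at those disjoint from `J`. -/
def meetVec (J : Finset (Fin d)) (x y : α) : CubeStar d → α :=
  fun ε => if Disjoint ε.1 J then y else x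

theorem const_induction_meetVec {P : (CubeStar d → α) → Prop} {x y : α}
    (hempty : P (Function.const _ y))
    (hinsert : ∀ j J, P (meetVec J x y) → P (meetVec (insert j J) x y)) :
    P (Function.const _ x) := by
  have hJ : ∀ J : Finset (Fin d), P (meetVec J x y) := fun J => by
    induction J using Finset.induction_on with
    | empty =>
      convert hempty using 1
      exact funext fun ε => if_pos (Finset.disjoint_empty_right ε.1)
    | insert j J _ ih => exact hinsert j J ih
  convert hJ Finset.univ using 1
  funext ε
  obtain ⟨j, hj⟩ := ε.2
  exact (if_neg (Finset.not_disjoint_iff.2 ⟨j, hj, Finset.mem_univ j⟩)).symm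

/-- Pullback of a vector along `ε ↦ ε ∩ J`, where `y` is used as the entry at the empty set. -/
def pullbackInter (J : Finset (Fin d)) (y : α) (x : CubeStar d → α) : CubeStar d → α :=
  fun ε => if h : (ε.1 ∩ J).Nonempty then x ⟨ε.1 ∩ J, h⟩ else y

theorem pullbackInter_const (J : Finset (Fin d)) (x y : α) :
    pullbackInter J y (Function.const _ x) = meetVec J x y := by
  funext ε
  by_cases h : Disjoint ε.1 J
  · simp only [pullbackInter, meetVec, Finset.disjoint_iff_inter_eq_empty.1 h,
      Finset.not_nonempty_empty, dite_false, h, if_true]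
  · simp only [pullbackInter, meetVec, h, if_false, Finset.not_disjoint_iff_nonempty_inter.1 h,
      dite_true]
    rfl

theorem pullbackInter_comp (J : Finset (Fin d)) (φ : α → β) (y : α) (x : CubeStar d → α) :
    pullbackInter J (φ y) (φ ∘ x) = φ ∘ pullbackInter J y x := by
  funext ε
  by_cases h : (ε.1 ∩ J).Nonempty <;>
    simp only [pullbackInter, Function.comp_apply, h, dite_true, dite_false]
  rfl

theorem pullbackInter_mul [Mul α] (J : Finset (Fin d)) (y y' : α) (x x' : CubeStar d → α) :
    pullbackInter J (y * y') (x * x') = pullbackInter J y x * pullbackInter J y' x' := by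
  funext ε
  by_cases h : (ε.1 ∩ J).Nonempty <;>
    simp only [pullbackInter, h, dite_true, dite_false, Pi.mul_apply]
  rfl

theorem pullbackInter_inv [Inv α] (J : Finset (Fin d)) (y : α) (x : CubeStar d → α) :
    pullbackInter J y⁻¹ x⁻¹ = (pullbackInter J y x)⁻¹ :=
  pullbackInter_comp J (·⁻¹) y x

theorem continuous_pullbackInter_apply [TopologicalSpace α] (J : Finset (Fin d))
    (ε : CubeStar d) : Continuous fun q : α × (CubeStar d → α) => pullbackInter J q.1 q.2 ε := by
  by_cases h : (ε.1 ∩ J).Nonempty <;> simp only [pullbackInter, h, dite_true, dite_false] <;>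
    fun_prop

end CubeVectors

section FaceEnvelope

variable {T : Type*} [Group T] {d : ℕ}

theorem pullbackInter_mem_faceGroupStar (J : Finset (Fin d)) {f : CubeStar d → T}
    (hf : f ∈ faceGroupStar T d) : pullbackInter J 1 f ∈ faceGroupStar T d := by
  induction hf using Subgroup.closure_induction with
  | mem f hf =>
    obtain ⟨t, j, rfl⟩ := hf
    by_cases hj : j ∈ J
    · refine Subgroup.subset_closure ⟨t, j, funext fun ε => ?_⟩
      by_cases hε : j ∈ ε.1
      · have hne : (ε.1 ∩ J).Nonempty := ⟨j, Finset.mem_inter.2 ⟨hε, hj⟩⟩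
        simp [pullbackInter, hne, hj, hε]
      · simp [pullbackInter, hε]
    · convert one_mem (faceGroupStar T d) using 1
      funext ε
      simp [pullbackInter, hj]
  | one =>
    have h := pullbackInter_comp J (fun _ : T => (1 : T)) 1 (1 : CubeStar d → T)
    exact h ▸ one_mem (faceGroupStar T d)
  | mul f g _ _ ihf ihg =>
    have h := pullbackInter_mul J 1 1 f g
    rw [mul_one] at h
    exact h ▸ mul_mem ihf ihg
  | inv f _ ih =>
    have h := pullbackInter_inv J 1 f
    rw [inv_one] at h
    exact h ▸ inv_mem ih

/-- The embedding of `T^{2^d-1}` into `(βT)^{2^d-1}` by principal ultrafilters. -/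
def principalVec (T : Type*) [Group T] (d : ℕ) :
    (CubeStar d → T) →ₙ* (CubeStar d → Ultrafilter T) where
  toFun f := pure ∘ f
  map_mul' _ _ := rfl

/-- The face group viewed inside `(βT)^{2^d-1}`. -/
def faceSemigroup (T : Type*) [Group T] (d : ℕ) : Subsemigroup (CubeStar d → Ultrafilter T) :=
  (faceGroupStar T d).toSubmonoid.toSubsemigroup.map (principalVec T d)

/-- The closure of the face group in `(βT)^{2^d-1}`. -/
def faceEnvelope (T : Type*) [Group T] (d : ℕ) : Set (CubeStar d → Ultrafilter T) :=
  closure (faceSemigroup T d)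

/-- The diagonal embedding of `βT` into `(βT)^{2^d-1}`. -/
abbrev diag {T : Type*} [Group T] (d : ℕ) : Ultrafilter T →ₙ* (CubeStar d → Ultrafilter T) :=
  Pi.constMulHom (CubeStar d) (Ultrafilter T)

theorem continuous_diag : Continuous (diag d : Ultrafilter T → CubeStar d → Ultrafilter T) :=
  continuous_pi fun _ => continuous_id

theorem continuous_cube_mul_right (q : CubeStar d → Ultrafilter T) :
    Continuous (· * q) :=
  continuous_pi fun ε => (Ultrafilter.continuous_mul_left (q ε)).comp (continuous_apply ε)

theorem continuous_cube_mul_left_of_mem_faceSemigroup {l : CubeStar d → Ultrafilter T}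
    (hl : l ∈ faceSemigroup T d) : Continuous (l * ·) := by
  obtain ⟨f, -, rfl⟩ := hl
  exact continuous_pi fun ε => (continuous_pure_mul (f ε)).comp (continuous_apply ε)

theorem principalVec_mem_faceEnvelope {f : CubeStar d → T} (hf : f ∈ faceGroupStar T d) :
    principalVec T d f ∈ faceEnvelope T d :=
  subset_closure (Subsemigroup.mem_map_of_mem _ hf)

theorem mul_mem_faceEnvelope {p q : CubeStar d → Ultrafilter T} (hp : p ∈ faceEnvelope T d)
    (hq : q ∈ faceEnvelope T d) : p * q ∈ faceEnvelope T d :=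
  mul_mem_closure_subsemigroup (fun _ => continuous_cube_mul_left_of_mem_faceSemigroup)
    (continuous_cube_mul_right q) hp hq

theorem meetVec_singleton_mem_faceEnvelope (j : Fin d) (p : Ultrafilter T) :
    meetVec {j} p (pure 1) ∈ faceEnvelope T d := by
  have hcont : Continuous fun p : Ultrafilter T => (meetVec {j} p (pure 1) : CubeStar d → _) :=
    continuous_pi fun ε => by
      by_cases h : Disjoint ε.1 {j} <;> simp only [meetVec, h, if_true, if_false] <;> fun_prop
  refine denseRange_pure.induction_on p (isClosed_closure.preimage hcont) fun t => ?_
  convert principalVec_mem_faceEnvelope (Subgroup.subset_closure ⟨t, j, rfl⟩) using 1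
  funext ε
  change _ = pure (if j ∈ ε.1 then t else 1)
  by_cases h : j ∈ ε.1 <;> simp [meetVec, h]

theorem diag_mem_faceEnvelope_of_isIdempotentElem {u : Ultrafilter T} (hu : IsIdempotentElem u) :
    diag d u ∈ faceEnvelope T d := by
  refine const_induction_meetVec (P := (· ∈ faceEnvelope T d)) (y := pure 1)
    (principalVec_mem_faceEnvelope (one_mem _)) fun j J ih => ?_
  convert mul_mem_faceEnvelope (meetVec_singleton_mem_faceEnvelope j u) ih using 1
  funext ε
  by_cases hj : j ∈ ε.1 <;> by_cases hJ : Disjoint ε.1 J <;>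
    simp [meetVec, hj, hJ, hu.eq, pure_one_mul, mul_pure_one]

/-- The triples `(f, f * diag a, a)` with `f` in the face group. A point of its closure is a
simultaneous limit of translating elements, translated diagonals and the points themselves. -/
def diagTranslates (T : Type*) [Group T] (d : ℕ) :
    Set (((CubeStar d → Ultrafilter T) × (CubeStar d → Ultrafilter T)) × Ultrafilter T) :=
  image2 (fun f a => ((f, f * diag d a), a)) (faceSemigroup T d) univ

theorem mul_right_mem_closure_diagTranslates {p z : CubeStar d → Ultrafilter T}
    {b : Ultrafilter T} (h : ((p, z), b) ∈ closure (diagTranslates T d)) (k : Ultrafilter T) :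
    ((p, z * diag d k), b * k) ∈ closure (diagTranslates T d) := by
  have hmaps : MapsTo (Prod.map (Prod.map id (· * diag d k)) (· * k))
      (diagTranslates T d) (diagTranslates T d) := by
    rintro _ ⟨f, hf, a, -, rfl⟩
    exact ⟨f, hf, a * k, mem_univ _, Prod.ext (Prod.ext rfl (mul_assoc _ _ _).symm) rfl⟩
  exact hmaps.closure ((continuous_id.prodMap (continuous_cube_mul_right _)).prodMap
    (Ultrafilter.continuous_mul_left k)) h

/-- If `f → p`, `f * diag a → z` and `a → b`, then pulling `f` back along `ε ↦ ε ∩ J` and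
multiplying by `a` on the face `j ∈ ε` gives this limit. -/
theorem pullbackInter_glue_mem_faceEnvelope (j : Fin d) (J : Finset (Fin d))
    {p z : CubeStar d → Ultrafilter T} {b : Ultrafilter T}
    (h : ((p, z), b) ∈ closure (diagTranslates T d)) :
    (fun ε => if j ∈ ε.1 then pullbackInter J b z ε else pullbackInter J (pure 1) p ε) ∈
      faceEnvelope T d := by
  let glue : ((CubeStar d → Ultrafilter T) × (CubeStar d → Ultrafilter T)) × Ultrafilter T →
      CubeStar d → Ultrafilter T := fun q ε =>
    if j ∈ ε.1 then pullbackInter J q.2 q.1.2 ε else pullbackInter J (pure 1) q.1.1 ε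
  have hglue : Continuous glue := continuous_pi fun ε => by
    by_cases hj : j ∈ ε.1 <;> simp only [glue, hj, if_true, if_false]
    · exact (continuous_pullbackInter_apply J ε).comp
        (continuous_snd.prodMk (continuous_snd.comp continuous_fst))
    · exact (continuous_pullbackInter_apply J ε).comp
        (continuous_const.prodMk (continuous_fst.comp continuous_fst))
  have hmaps : MapsTo glue (diagTranslates T d) (faceEnvelope T d) := by
    rintro _ ⟨_, ⟨f, hf, rfl⟩, a, -, rfl⟩
    convert mul_mem_faceEnvelope
      (principalVec_mem_faceEnvelope (pullbackInter_mem_faceGroupStar J hf))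
      (meetVec_singleton_mem_faceEnvelope j a) using 1
    have hprincipal : pullbackInter J (pure 1) (principalVec T d f) =
        principalVec T d (pullbackInter J 1 f) := pullbackInter_comp J pure 1 f
    have htranslate : pullbackInter J a (principalVec T d f * diag d a) =
        principalVec T d (pullbackInter J 1 f) * diag d a := by
      have hmul := pullbackInter_mul J (pure 1) a (principalVec T d f) (diag d a)
      rw [pure_one_mul, hprincipal] at hmul
      rw [hmul]
      congr 1
      exact (pullbackInter_const J a a).trans (funext fun _ => ite_self _)
    funext ε
    by_cases hj : j ∈ ε.1 <;>
      simp [glue, hj, htranslate, hprincipal, meetVec, mul_pure_one]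
  exact hmaps.closure_left hglue isClosed_closure h

theorem diag_mul_mem_faceEnvelope {u b : Ultrafilter T} (hu : IsIdempotentElem u)
    (hbu : b * u = b) (h : ((diag d u, diag d u), b) ∈ closure (diagTranslates T d)) :
    diag d (u * b) ∈ faceEnvelope T d := by
  have hU := diag_mem_faceEnvelope_of_isIdempotentElem (d := d) hu
  have hpull : ∀ J y, pullbackInter J y (diag d u) = meetVec J u y := fun J =>
    pullbackInter_const J u
  refine const_induction_meetVec (P := (· ∈ faceEnvelope T d)) (x := u * b) (y := u) hU
    fun j J ih => ?_
  -- At `ε` the product is `u * u * (u * b)` if `ε` meets `J`; otherwise it is `u * b * u` if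
  -- `j ∈ ε` and `u * 1 * u` if not.
  convert mul_mem_faceEnvelope hU (mul_mem_faceEnvelope
    (pullbackInter_glue_mem_faceEnvelope j J h) ih) using 1
  have huub : u * (u * b) = u * b := by rw [← mul_assoc, hu.eq]
  funext ε
  by_cases hj : j ∈ ε.1 <;> by_cases hJ : Disjoint ε.1 J <;>
    simp [hpull, meetVec, hj, hJ, hu.eq, hbu, huub, pure_one_mul]

end FaceEnvelope

section TauClosure

variable {T : Type*} [Group T] {d : ℕ} {M : Set (Ultrafilter T)} {u : Ultrafilter T}

theorem circOpM_eq_circ (B : Set (CubeStar d → Ultrafilter T)) :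
    circOpM d u B = circ (faceSemigroup T d) (diag d u) B := by
  have hgraph : {q | ∃ f ∈ faceGroupStar T d, ∃ b ∈ B,
      q = (principalVec T d f, principalVec T d f * b)} = actionGraph (faceSemigroup T d) B := by
    ext q
    constructor
    · rintro ⟨f, hf, b, hb, rfl⟩
      exact mem_image2_of_mem (Subsemigroup.mem_map_of_mem _ hf) hb
    · rintro ⟨_, ⟨f, hf, rfl⟩, b, hb, rfl⟩
      exact ⟨f, hf, b, hb, rfl⟩
  rw [circ, ← hgraph]
  rfl

theorem mul_mem_circ_faceSemigroup (hu : IsIdempotentElem u) {z : CubeStar d → Ultrafilter T}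
    {B : Set (CubeStar d → Ultrafilter T)} (hz : z ∈ circ (faceSemigroup T d) (diag d u) B) :
    diag d u * z ∈ circ (faceSemigroup T d) (diag d u) B := by
  have h := mul_mem_circ_mul (fun _ => continuous_cube_mul_left_of_mem_faceSemigroup)
    continuous_cube_mul_right (diag_mem_faceEnvelope_of_isIdempotentElem hu) hz
  rwa [← map_mul, hu.eq] at h

theorem mem_clTauG_iff (hu : IsIdempotentElem u) {g : Ultrafilter T} {A : Set (Ultrafilter T)} :
    g ∈ clTauG d M u A ↔
      g ∈ (u * ·) '' M ∧ diag d g ∈ circ (faceSemigroup T d) (diag d u) (diag d '' A) := by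
  refine and_congr_right fun hg => ?_
  rw [circOpM_eq_circ]
  constructor
  · rintro ⟨z, hz, hzg⟩
    exact mem_of_eq_of_mem hzg.symm (mul_mem_circ_faceSemigroup hu hz)
  · obtain ⟨m, -, rfl⟩ := hg
    refine fun h => ⟨_, h, funext fun _ => ?_⟩
    exact (mul_assoc u u m).symm.trans (congrArg (· * m) hu)

theorem clTauG_mono (hu : IsIdempotentElem u) {A B : Set (Ultrafilter T)} (h : A ⊆ B) :
    clTauG d M u A ⊆ clTauG d M u B := fun g hg => by
  rw [mem_clTauG_iff hu] at hg ⊢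
  exact ⟨hg.1, circ_mono (image_mono h) hg.2⟩

/-- A `τ^[d]`-closed subgroup of `uM`, with identity the idempotent `u`. -/
structure TauClosedSubgroup (d : ℕ) (M : Set (Ultrafilter T)) (u : Ultrafilter T) where
  carrier : Set (Ultrafilter T)
  subset_image : carrier ⊆ (u * ·) '' M
  clTauG_eq : clTauG d M u carrier = carrier
  idem : IsIdempotentElem u
  one_mem : u ∈ carrier
  mul_mem : ∀ g ∈ carrier, ∀ h ∈ carrier, g * h ∈ carrier
  exists_inv : ∀ g ∈ carrier, ∃ g' ∈ carrier, g * g' = u ∧ g' * g = u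

end TauClosure

namespace TauClosedSubgroup

variable {T : Type*} [Group T] {d : ℕ} {M : Set (Ultrafilter T)} {u : Ultrafilter T}
  (F : TauClosedSubgroup d M u)

/-- The points of `F`, as a type of their own: it carries the topology `τ^[d]` and not the
subspace topology of `βT`. -/
def Elem : Type _ := {p // p ∈ F.carrier}

instance : CoeSort (TauClosedSubgroup d M u) (Type _) := ⟨Elem⟩

instance : Mul F := ⟨fun g h => ⟨g.1 * h.1, F.mul_mem _ g.2 _ h.2⟩⟩

instance : One F := ⟨⟨u, F.one_mem⟩⟩

noncomputable instance : Inv F :=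
  ⟨fun g => ⟨(F.exists_inv _ g.2).choose, (F.exists_inv _ g.2).choose_spec.1⟩⟩

theorem identity_mul_of_mem_carrier {g : Ultrafilter T} (hg : g ∈ F.carrier) : u * g = g := by
  obtain ⟨m, -, rfl⟩ := F.subset_image hg
  exact (mul_assoc u u m).symm.trans (congrArg (· * m) F.idem)

noncomputable instance : Group F :=
  Group.ofLeftAxioms (fun g h k => Subtype.ext (mul_assoc g.1 h.1 k.1))
    (fun g => Subtype.ext (F.identity_mul_of_mem_carrier g.2))
    (fun g => Subtype.ext (F.exists_inv _ g.2).choose_spec.2.2)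

/-- The inclusion of `F` in `βT`. -/
def val : F →ₙ* Ultrafilter T where
  toFun := Subtype.val
  map_mul' _ _ := rfl

theorem val_mul_identity (g : F) : F.val g * u = F.val g := congrArg F.val (mul_one g)

theorem val_injective : Function.Injective F.val := Subtype.val_injective

theorem range_val : range F.val = F.carrier := Subtype.range_val

theorem image_val_subset_carrier (A : Set F) : F.val '' A ⊆ F.carrier :=
  F.range_val ▸ image_subset_range F.val A

/-- The diagonal embedding of `F` into `(βT)^{2^d-1}`. -/
def toCube : F →ₙ* (CubeStar d → Ultrafilter T) := (diag d).comp F.val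

/-- The `τ^[d]`-closure relative to `F`. -/
def tauClosure (A : Set F) : Set F :=
  {g | F.toCube g ∈ circ (faceSemigroup T d) (F.toCube 1) (F.toCube '' A)}

theorem tauClosure_mono {A B : Set F} (h : A ⊆ B) : F.tauClosure A ⊆ F.tauClosure B :=
  fun _ hg => circ_mono (image_mono h) hg

theorem toCube_one_mem_faceEnvelope : F.toCube 1 ∈ faceEnvelope T d :=
  diag_mem_faceEnvelope_of_isIdempotentElem F.idem

theorem subset_tauClosure (A : Set F) : A ⊆ F.tauClosure A := fun g hg => by
  have h := mul_mem_circ (continuous_cube_mul_right _) F.toCube_one_mem_faceEnvelope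
    (mem_image_of_mem F.toCube hg)
  rwa [← map_mul, one_mul] at h

theorem tauClosure_tauClosure_subset (A : Set F) :
    F.tauClosure (F.tauClosure A) ⊆ F.tauClosure A := fun g hg => by
  have h := circ_circ_subset (fun _ => continuous_cube_mul_left_of_mem_faceSemigroup)
    (continuous_cube_mul_right _) (circ_mono (image_subset_iff.2 fun _ ha => ha) hg)
  rwa [← map_mul, one_mul] at h

/-- The topology `τ^[d]`. -/
instance : TopologicalSpace F :=
  TopologicalSpace.ofClosed {A | F.tauClosure A ⊆ A}
    (by simp [tauClosure, circ_empty])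
    (fun _ hS _ hg A hA => hS hA (F.tauClosure_mono (sInter_subset_of_mem hA) hg))
    (fun A hA B hB => by
      have hunion : F.tauClosure (A ∪ B) = F.tauClosure A ∪ F.tauClosure B := by
        simp only [tauClosure, image_union, circ_union]
        rfl
      exact hunion.trans_subset (union_subset_union hA hB))

theorem isClosed_iff_tauClosure_subset {A : Set F} : IsClosed A ↔ F.tauClosure A ⊆ A := by
  rw [← isOpen_compl_iff]
  change F.tauClosure Aᶜᶜ ⊆ Aᶜᶜ ↔ _
  rw [compl_compl]

theorem closure_eq_tauClosure (A : Set F) : closure A = F.tauClosure A := by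
  refine Subset.antisymm (closure_minimal (F.subset_tauClosure A) ?_) ?_
  · exact F.isClosed_iff_tauClosure_subset.2 (F.tauClosure_tauClosure_subset A)
  · exact (F.tauClosure_mono subset_closure).trans
      (F.isClosed_iff_tauClosure_subset.1 isClosed_closure)

theorem mem_closure_iff_toCube {g : F} {A : Set F} :
    g ∈ closure A ↔ F.toCube g ∈ circ (faceSemigroup T d) (F.toCube 1) (F.toCube '' A) := by
  rw [closure_eq_tauClosure]
  rfl

theorem clTauG_image_val (A : Set F) : clTauG d M u (F.val '' A) = F.val '' closure A := by
  ext g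
  constructor
  · intro hg
    have hgF : g ∈ F.carrier :=
      F.clTauG_eq ▸ clTauG_mono F.idem (F.image_val_subset_carrier A) hg
    have hcirc := ((mem_clTauG_iff F.idem).1 hg).2
    rw [image_image] at hcirc
    exact ⟨⟨g, hgF⟩, F.mem_closure_iff_toCube.2 hcirc, rfl⟩
  · rintro ⟨g, hg, rfl⟩
    refine (mem_clTauG_iff F.idem).2 ⟨F.subset_image g.2, ?_⟩
    rw [image_image]
    exact F.mem_closure_iff_toCube.1 hg

theorem continuous_mul_right (g : F) : Continuous (· * g) := by
  refine continuous_iff_image_closure_subset_closure_image.2 fun A => ?_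
  rintro _ ⟨x, hx, rfl⟩
  rw [mem_closure_iff_toCube] at hx ⊢
  have h := mul_mem_circ_image_mul_right (continuous_cube_mul_right (F.toCube g)) hx
  simpa only [image_image, map_mul] using h

theorem continuous_mul_left {g : F} (hg : F.toCube g ∈ faceEnvelope T d)
    (hg' : F.toCube g⁻¹ ∈ faceEnvelope T d) : Continuous (g * ·) := by
  refine continuous_iff_image_closure_subset_closure_image.2 fun A => ?_
  rintro _ ⟨x, hx, rfl⟩
  rw [mem_closure_iff_toCube] at hx ⊢
  have hl : ∀ l ∈ faceSemigroup T d, Continuous (l * ·) := fun _ =>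
    continuous_cube_mul_left_of_mem_faceSemigroup
  have hcancel : ∀ b ∈ F.toCube '' A, F.toCube g⁻¹ * (F.toCube g * b) = b := by
    rintro _ ⟨a, -, rfl⟩
    rw [← map_mul, ← map_mul, inv_mul_cancel_left]
  have h := circ_subset_circ_mul_image hl continuous_cube_mul_right hg' hcancel
    (mul_mem_circ_mul hl continuous_cube_mul_right hg hx)
  simpa only [← map_mul, mul_one, mul_inv_cancel, image_image] using h

theorem val_mem_leftIdeal (hM : IsMinimalLeftIdeal M) (g : F) : F.val g ∈ M := by
  obtain ⟨m, hm, hmg⟩ := F.subset_image g.2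
  exact mem_of_eq_of_mem hmg.symm (hM.1.2 m hm u)

theorem toCube_inv_mem_faceEnvelope (hM : IsMinimalLeftIdeal M) {g : F}
    (hg : F.toCube g ∈ faceEnvelope T d) : F.toCube g⁻¹ ∈ faceEnvelope T d := by
  refine inverse_mem_of_isCompact continuous_cube_mul_right (isClosed_closure.isCompact)
    (fun _ hx _ => mul_mem_faceEnvelope hx) F.toCube_one_mem_faceEnvelope hg
    (by rw [← map_mul, mul_inv_cancel]) (by rw [← map_mul, one_mul]) fun p hp => ?_
  exact funext fun ε => mul_idempotent_of_isMinimalLeftIdeal hM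
    (hM.1.2 _ (F.val_mem_leftIdeal hM g) (p ε)) (congrFun hp ε) (F.val_mem_leftIdeal hM 1)

theorem mul_identity_of_mem_closure_range {b : Ultrafilter T} (hb : b ∈ closure (range F.val)) :
    b * u = b := by
  have hclosed : IsClosed {b : Ultrafilter T | b * u = b} :=
    isClosed_eq (Ultrafilter.continuous_mul_left u) continuous_id
  refine closure_minimal ?_ hclosed hb
  rintro _ ⟨g, rfl⟩
  exact F.val_mul_identity g

theorem exists_val_eq_identity_mul (hM : IsMinimalLeftIdeal M) {b : Ultrafilter T}
    (hb : b ∈ closure (range F.val)) : ∃ c : F, F.val c = u * b := by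
  have hbM : b ∈ M := F.mul_identity_of_mem_closure_range hb ▸ hM.1.2 _ (F.val_mem_leftIdeal hM 1) b
  have hmaps : MapsTo (diag d) (range F.val)
      (circ (faceSemigroup T d) (diag d u) (diag d '' F.carrier)) := fun g hg => by
    rw [range_val, ← F.clTauG_eq] at hg
    exact ((mem_clTauG_iff F.idem).1 hg).2
  have hcirc := hmaps.closure_left continuous_diag isClosed_circ hb
  have hmem : u * b ∈ clTauG d M u F.carrier :=
    (mem_clTauG_iff F.idem).2 ⟨mem_image_of_mem _ hbM, mul_mem_circ_faceSemigroup F.idem hcirc⟩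
  exact ⟨⟨_, F.clTauG_eq ▸ hmem⟩, rfl⟩

theorem toCube_mul_inv_mem_faceEnvelope {l : Filter F} {b : Ultrafilter T}
    (hb : Tendsto F.val l (𝓝 b)) {c g : F} (hc : F.val c = u * b) (hg : ClusterPt g l) :
    F.toCube (c * g⁻¹) ∈ faceEnvelope T d := by
  have hcirc : ∀ s ∈ l, (F.toCube 1, F.toCube g) ∈
      closure (image2 (fun f a => (f, f * F.toCube a)) (faceSemigroup T d) s) := fun s hs => by
    have h : (F.toCube 1, F.toCube g) ∈ closure (actionGraph _ _) :=
      F.mem_closure_iff_toCube.1 (hg.mem_closure_of_mem _ hs)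
    rwa [actionGraph, image2_image_right] at h
  have htriple : ((F.toCube 1, F.toCube g), b) ∈ closure (diagTranslates T d) := by
    refine closure_mono ?_ (prodMk_mem_closure_of_tendsto hb hcirc)
    rintro _ ⟨f, hf, a, -, rfl⟩
    exact ⟨f, hf, F.val a, mem_univ _, rfl⟩
  have htranslate := mul_right_mem_closure_diagTranslates htriple (F.val g⁻¹)
  have hinv : F.toCube g * diag d (F.val g⁻¹) = diag d u :=
    congrArg F.toCube (mul_inv_cancel g)
  rw [hinv] at htranslate
  have hfix : b * F.val g⁻¹ * u = b * F.val g⁻¹ := by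
    rw [mul_assoc, val_mul_identity]
  have h := diag_mul_mem_faceEnvelope F.idem hfix htranslate
  rwa [← mul_assoc, ← hc] at h

theorem toCube_mem_faceEnvelope_of_clusterPt (hM : IsMinimalLeftIdeal M) {h : F}
    (hh : ClusterPt h (𝓝 1)) : F.toCube h ∈ faceEnvelope T d := by
  obtain ⟨U, hU1, hUh⟩ := clusterPt_iff_ultrafilter.1 hh
  obtain ⟨b, -, hb⟩ := isCompact_univ.ultrafilter_le_nhds (U.map F.val) (by simp)
  have hrange : b ∈ closure (range F.val) :=
    mem_closure_of_tendsto hb (Eventually.of_forall mem_range_self)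
  obtain ⟨c, hc⟩ := F.exists_val_eq_identity_mul hM hrange
  have hmem : ∀ {g : F}, ↑U ≤ 𝓝 g → F.toCube (c * g⁻¹) ∈ faceEnvelope T d := fun hg =>
    F.toCube_mul_inv_mem_faceEnvelope hb hc (ClusterPt.of_le_nhds hg)
  have hmul := mul_mem_faceEnvelope (F.toCube_inv_mem_faceEnvelope hM (hmem hUh)) (hmem hU1)
  rwa [← map_mul, inv_one, mul_one, mul_inv_rev, inv_inv, inv_mul_cancel_right] at hmul

theorem clusterPt_mul (hM : IsMinimalLeftIdeal M) {g h : F} (hg : ClusterPt g (𝓝 1))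
    (hh : ClusterPt h (𝓝 1)) : ClusterPt (g * h) (𝓝 1) := by
  have hgE := F.toCube_mem_faceEnvelope_of_clusterPt hM hg
  exact clusterPt_mul_nhds_one F.continuous_mul_right
    (F.continuous_mul_left hgE (F.toCube_inv_mem_faceEnvelope hM hgE)) hg hh

theorem isOpen_iff_clTauG_diff {V : Set F} :
    IsOpen V ↔ clTauG d M u (F.carrier \ F.val '' V) = F.carrier \ F.val '' V := by
  have hcompl : F.carrier \ F.val '' V = F.val '' Vᶜ := by
    rw [← F.range_val, image_compl_eq_range_sdiff_image F.val_injective]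
  rw [hcompl, clTauG_image_val, F.val_injective.image_injective.eq_iff, closure_eq_iff_isClosed,
    isClosed_compl_iff]

theorem Htau_eq_image_clusterPt : Htau d M u F.carrier = F.val '' {h | ClusterPt h (𝓝 1)} := by
  ext g
  simp only [Htau, mem_sInter, mem_image, mem_ofPred_eq,
    (nhds_basis_opens (1 : F)).clusterPt_iff_forall_mem_closure]
  constructor
  · intro hg
    have hmem : ∀ V : Set F, 1 ∈ V ∧ IsOpen V → g ∈ F.val '' closure V := fun V ⟨h1, hV⟩ =>
      F.clTauG_image_val V ▸ hg _ ⟨_, ⟨F.image_val_subset_carrier V, ⟨1, h1, rfl⟩,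
        F.isOpen_iff_clTauG_diff.1 hV⟩, rfl⟩
    obtain ⟨h, -, rfl⟩ := hmem univ ⟨mem_univ 1, isOpen_univ⟩
    exact ⟨h, fun V hV => (F.val_injective.mem_set_image).1 (hmem V hV), rfl⟩
  · rintro ⟨h, hh, rfl⟩ _ ⟨V, ⟨hVF, h1, hV⟩, rfl⟩
    obtain ⟨V, rfl⟩ := subset_range_iff_exists_image_eq.1 (F.range_val.symm ▸ hVF)
    rw [clTauG_image_val]
    exact mem_image_of_mem _ (hh V ⟨(F.val_injective.mem_set_image).1 h1,
      F.isOpen_iff_clTauG_diff.2 hV⟩)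

end TauClosedSubgroup

end TauTopology

/-- For a `τ^[d]`-closed subgroup `F` of `G = uM`, the set `H_{τ^[d]}(F)` is a
`τ^[d]`-closed subgroup of `F`. -/
theorem Htau_is_tau_closed_subgroup
    {T : Type*} [Group T] (d : ℕ) (M : Set (Ultrafilter T))
    (hM : IsMinimalLeftIdeal M) (u : Ultrafilter T) (hu : u ∈ M) (hidem : u * u = u)
    (F : Set (Ultrafilter T)) (hFsub : F ⊆ (fun p => u * p) '' M)
    (hFclosed : clTauG d M u F = F) (hFid : u ∈ F)
    (hFmul : ∀ g ∈ F, ∀ h ∈ F, g * h ∈ F)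
    (hFinv : ∀ g ∈ F, ∃ g' ∈ F, g * g' = u ∧ g' * g = u) :
    Htau d M u F ⊆ F ∧
    clTauG d M u (Htau d M u F) = Htau d M u F ∧
    u ∈ Htau d M u F ∧
    (∀ g ∈ Htau d M u F, ∀ h ∈ Htau d M u F, g * h ∈ Htau d M u F) ∧
    (∀ g ∈ Htau d M u F, ∃ g' ∈ Htau d M u F, g * g' = u ∧ g' * g = u) := by
  let F' : TauTopology.TauClosedSubgroup d M u := ⟨F, hFsub, hFclosed, hidem, hFid, hFmul, hFinv⟩
  have hclosed : IsClosed {h : F' | ClusterPt h (𝓝 1)} := isClosed_setOfPred_clusterPt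
  rw [show Htau d M u F = F'.val '' {h | ClusterPt h (𝓝 1)} from F'.Htau_eq_image_clusterPt]
  refine ⟨?_, ?_, ⟨1, ClusterPt.of_le_nhds le_rfl, rfl⟩, ?_, ?_⟩
  · rintro _ ⟨g, -, rfl⟩
    exact g.2
  · rw [F'.clTauG_image_val, hclosed.closure_eq]
  · rintro _ ⟨g, hg, rfl⟩ _ ⟨h, hh, rfl⟩
    exact ⟨g * h, F'.clusterPt_mul hM hg hh, rfl⟩
  · rintro _ ⟨g, hg, rfl⟩
    exact ⟨F'.val g⁻¹, ⟨g⁻¹, TauTopology.clusterPt_inv_nhds_one (F'.continuous_mul_right g⁻¹) hg,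
      rfl⟩, congrArg F'.val (mul_inv_cancel g), congrArg F'.val (inv_mul_cancel g)⟩
end

section
/- Let π:(X,T)→(Y,T) be a factor of minimal systems with T abelian, d ≥ 2, such that π is open and the maximal factor of order d−1 of X is a factor of Y. Then the dynamical cube Q^[d](X) is π^[d]-saturated, i.e., (π^[d])⁻¹(π^[d](Q^[d](X))) = Q^[d](X). -/
/-- The Host–Kra cube group of order `n` of `T`. -/
def HKgroup (T : Type*) [Group T] (n : ℕ) : Subgroup (Finset (Fin n) → T) :=
  Subgroup.closure
    {f | ∃ t : T, ∃ j : Fin n, ∃ b : Bool, f = fun ε => if decide (j ∈ ε) = b then t else 1}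

/-- The space of dynamical cubes of dimension `n`. -/
def cubeQ (T : Type*) [Group T] (X : Type*) [TopologicalSpace X] [MulAction T X]
    (n : ℕ) : Set (Finset (Fin n) → X) :=
  closure {q | ∃ f ∈ HKgroup T n, ∃ x : X, q = fun ε => f ε • x}

/-- The regionally proximal relation of order `d`. -/
def RPrel {T : Type*} [Group T] (X : Type*) [TopologicalSpace X] [MulAction T X]
    (d : ℕ) : Set (X × X) :=
  {p | ∃ a : CubeStar d → X,
    ((p.1, a), (p.2, a)) ∈ closure
      {q : (X × (CubeStar d → X)) × (X × (CubeStar d → X)) |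
        ∃ x' y' : X, ∃ f ∈ faceGroupStar T d,
          q = ((x', fun ε => f ε • x'), (y', fun ε => f ε • y'))}}

open Filter Set
open scoped Pointwise Topology

/-!
It suffices to move one vertex of a cube at a time within its fibre of `π`, and by the reflections
of the cube only the empty vertex has to be moved. Since diagonal points generate the cube space and
`π` is open, one may assume that the cube is close to a diagonal point `(x, …, x)`, whose empty
vertex is to be replaced by `x'` with `π x = π x'`.

As `x` and `x'` are regionally proximal of order `d - 1`, gluing the two pointed cubes that witness
this along opposite faces gives *some* cube with empty vertex `x` in which `x` may be replaced by
`x'`. Elements of the face group fix the empty vertex, so it remains to bring the other vertices of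
that cube back close to `x` with such an element. For a cube in the orbit of a diagonal point this
is possible by recurrence: every point is almost periodic for `T`, hence so is its diagonal point
for the face group, as one sees from an idempotent in a minimal left ideal of the Stone–Čech
semigroup `βT`.

To pass to the closure, the finite set of return elements has to be the same for all points of
some open set. If it were not, one could construct a decreasing sequence of open sets along with an
increasing sequence of finite subsets of `T` whose union is a submonoid `H`, such that return fails
under `H` at every point of the intersection; but some point of the intersection is almost periodic
for `H`. This countable construction takes the place of a Baire category argument, which would need
`T` to be countable.
-/

section LeftIdeals

variable {S : Type*} [Semigroup S]

/-- A minimal left ideal of a semigroup: a nonempty left ideal that is generated, as a left ideal,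
by each of its elements. -/
structure IsMinimalLeftIdeal_s18 (L : Set S) : Prop where
  nonempty : L.Nonempty
  mul_mem : ∀ a, ∀ p ∈ L, a * p ∈ L
  exists_mul_eq : ∀ p ∈ L, ∀ q ∈ L, ∃ a, a * p = q

theorem IsMinimalLeftIdeal_s18.mul_idempotent {L : Set S} (hL : IsMinimalLeftIdeal_s18 L) {e p : S}
    (heL : e ∈ L) (he : e * e = e) (hp : p ∈ L) : p * e = p := by
  obtain ⟨a, rfl⟩ := hL.exists_mul_eq e heL p hp
  rw [mul_assoc, he]

variable [TopologicalSpace S] [CompactSpace S] [T2Space S]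

theorem IsMinimalLeftIdeal_s18.isClosed {L : Set S} (hL : IsMinimalLeftIdeal_s18 L)
    (hcont : ∀ r : S, Continuous (· * r)) : IsClosed L := by
  obtain ⟨p, hp⟩ := hL.nonempty
  have hrange : L = range (· * p) :=
    Subset.antisymm (fun q hq => hL.exists_mul_eq p hp q hq)
      (range_subset_iff.2 fun a => hL.mul_mem a p hp)
  exact hrange ▸ (isCompact_range (hcont p)).isClosed

theorem exists_isMinimalLeftIdeal [Nonempty S] (hcont : ∀ r : S, Continuous (· * r)) :
    ∃ L : Set S, IsMinimalLeftIdeal_s18 L := by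
  let ideals : Set (Set S) := {L | IsClosed L ∧ L.Nonempty ∧ ∀ a, ∀ p ∈ L, a * p ∈ L}
  obtain ⟨L, -, hL⟩ : ∃ L ⊆ univ, Minimal (· ∈ ideals) L := by
    refine zorn_superset_nonempty ideals (fun c hc hchain hne => ?_) univ
      ⟨isClosed_univ, univ_nonempty, fun _ _ _ => mem_univ _⟩
    have : Nonempty c := hne.to_subtype
    have hdir : DirectedOn (· ⊇ ·) c := fun A hA B hB => (hchain.total hA hB).elim
      (fun h => ⟨A, hA, Subset.rfl, h⟩) fun h => ⟨B, hB, h, Subset.rfl⟩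
    exact ⟨⋂₀ c, ⟨isClosed_sInter fun L hL => (hc hL).1,
      IsCompact.nonempty_sInter_of_directed_nonempty_isCompact_isClosed hdir
        (fun L hL => (hc hL).2.1) (fun L hL => (hc hL).1.isCompact) fun L hL => (hc hL).1,
      fun a p hp L hL => (hc hL).2.2 a p (hp L hL)⟩, fun L hL => sInter_subset_of_mem hL⟩
  refine ⟨L, hL.prop.2.1, hL.prop.2.2, fun p hp q hq => ?_⟩
  have hrange : range (· * p) = L := hL.eq_of_subset
    ⟨(isCompact_range (hcont p)).isClosed, ⟨_, p, rfl⟩, by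
      rintro a _ ⟨b, rfl⟩
      exact ⟨a * b, mul_assoc a b p⟩⟩
    (range_subset_iff.2 fun a => hL.prop.2.2 a p hp)
  rwa [← hrange] at hq

theorem IsMinimalLeftIdeal_s18.exists_map_mul_eq {S' κ : Type*} [Semigroup S'] {L : Set S'}
    (hL : IsMinimalLeftIdeal_s18 L) (hcont : ∀ r : S, Continuous (· * r)) (φ : κ → S →ₙ* S')
    {p : S'} (hp : p ∈ L) {v : S} (hv : ∀ k, φ k v = p) (a : S) :
    ∃ b, ∀ k, φ k (b * (a * v)) = p := by
  -- A single idempotent of the left ideal generated by `a * v` serves all `k`: its images under the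
  -- `φ k` are idempotents of `L`, hence right identities there.
  obtain ⟨_, ⟨c, rfl⟩, hidem⟩ := exists_idempotent_in_compact_subsemigroup hcont
    (range (· * (a * v))) ⟨_, a, rfl⟩ (isCompact_range (hcont _)) (by
      rintro _ ⟨x, rfl⟩ _ ⟨y, rfl⟩
      exact ⟨x * (a * v) * y, mul_assoc _ _ _⟩)
  refine ⟨v * c, fun k => ?_⟩
  have hmem : φ k (c * (a * v)) ∈ L := by
    rw [← mul_assoc, map_mul, hv]
    exact hL.mul_mem _ p hp
  rw [mul_assoc, map_mul, hv]
  exact hL.mul_idempotent hmem (by rw [← map_mul, hidem]) hp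

end LeftIdeals

section Ultrafilters

attribute [local instance] Ultrafilter.mul Ultrafilter.semigroup

/-- The homomorphism of Stone–Čech semigroups induced by a multiplicative map. -/
def ultrafilterMapHom {M N F : Type*} [Mul M] [Mul N] [FunLike F M N] [MulHomClass F M N] (f : F) :
    Ultrafilter M →ₙ* Ultrafilter N where
  toFun U := U.map f
  map_mul' U V := Ultrafilter.coe_inj.1 <| Filter.ext' fun P => by
    simp [Ultrafilter.eventually_mul]

theorem pure_one_mul_ultrafilter {M : Type*} [Monoid M] (p : Ultrafilter M) : pure 1 * p = p :=
  Ultrafilter.coe_inj.1 <| Filter.ext' fun P => by simp [Ultrafilter.eventually_mul]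

theorem ultrafilter_mul_pure_one {M : Type*} [Monoid M] (p : Ultrafilter M) : p * pure 1 = p :=
  Ultrafilter.coe_inj.1 <| Filter.ext' fun P => by simp [Ultrafilter.eventually_mul]

section Syndetic

variable {M : Type*} [Mul M]

/-- Left syndetic sets: finitely many left translates of any element reach `A`. -/
def IsSyndetic (A : Set M) : Prop := ∃ K : Finset M, ∀ g, ∃ f ∈ K, f * g ∈ A

theorem IsSyndetic.mono {A B : Set M} (hA : IsSyndetic A) (hAB : A ⊆ B) : IsSyndetic B :=
  hA.imp fun _ hK g => (hK g).imp fun _ hf => ⟨hf.1, hAB hf.2⟩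

theorem isSyndetic_of_ultrafilter {A : Set M}
    (hA : ∀ a : Ultrafilter M, ∃ f, ∀ᶠ g in a, f * g ∈ A) : IsSyndetic A := by
  obtain ⟨K, hK⟩ := isCompact_univ.elim_finite_subcover
    (fun f => {a : Ultrafilter M | (f * ·) ⁻¹' A ∈ a}) (fun f => ultrafilter_isOpen_basic _)
    (fun a _ => mem_iUnion.2 (hA a))
  refine ⟨K, fun g => ?_⟩
  obtain ⟨f, hf, hg⟩ := mem_iUnion₂.1 (hK (mem_univ (pure g)))
  exact ⟨f, hf, Ultrafilter.mem_pure.1 hg⟩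

theorem isClosed_setOf_tendsto_ultrafilter {α β : Type*} (φ : α → β) (F : Filter β) :
    IsClosed {p : Ultrafilter α | Tendsto φ p F} := by
  simp only [tendsto_def, ofPred_forall]
  exact isClosed_biInter fun A _ => ultrafilter_isClosed_basic (φ ⁻¹' A)

theorem IsMinimalLeftIdeal_s18.exists_ultrafilter_le {M : Type*} [Semigroup M]
    {L : Set (Ultrafilter M)} (hL : IsMinimalLeftIdeal_s18 L) {F : Filter M}
    (hF : ∀ A ∈ F, IsSyndetic A) : ∃ p ∈ L, ↑p ≤ F := by
  obtain ⟨q, hq⟩ := hL.nonempty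
  have hLcompact : IsCompact L := (hL.isClosed Ultrafilter.continuous_mul_left).isCompact
  obtain ⟨p, hpL, hpF⟩ := hLcompact.inter_iInter_nonempty
    (fun A : F.sets => {p : Ultrafilter M | A.1 ∈ p}) (fun A => ultrafilter_isClosed_basic _)
    fun u => by
      obtain ⟨K, hK⟩ := hF (⋂ A ∈ u, A.1) ((biInter_finset_mem u).2 fun A _ => A.2)
      obtain ⟨f, -, hf⟩ : ∃ f ∈ K, ∀ᶠ g in q, f * g ∈ ⋂ A ∈ u, A.1 :=
        (q.eventually_exists_mem_iff K.finite_toSet).1 (.of_forall hK)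
      refine ⟨pure f * q, hL.mul_mem _ q hq, mem_iInter₂.2 fun A hA => ?_⟩
      exact hf.mono fun g hg => mem_iInter₂.1 hg A hA
  exact ⟨p, hpL, fun A hA => mem_iInter.1 hpF ⟨A, hA⟩⟩

end Syndetic

section AlmostPeriodic

variable {M X : Type*} [Monoid M] [TopologicalSpace X] [MulAction M X]

/-- Almost periodicity of `x` under `M`, also called uniform recurrence. -/
def IsAlmostPeriodicPt (M : Type*) [Monoid M] [MulAction M X] (x : X) : Prop :=
  ∀ O ∈ 𝓝 x, IsSyndetic {g : M | g • x ∈ O}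

theorem exists_finset_smul_mem [CompactSpace X] [ContinuousConstSMul M X]
    [MulAction.IsMinimal M X] {O : Set X} (hO : IsOpen O) (hne : O.Nonempty) :
    ∃ K : Finset M, ∀ x : X, ∃ t ∈ K, t • x ∈ O := by
  obtain ⟨K, hK⟩ := isCompact_univ.elim_finite_subcover (fun t : M => (t • ·) ⁻¹' O)
    (fun t => hO.preimage (continuous_const_smul t)) (hO.iUnion_preimage_smul M hne).ge
  refine ⟨K, fun x => ?_⟩
  simpa using hK (mem_univ x)

variable [ContinuousConstSMul M X]

theorem tendsto_smul_ultrafilter_mul {x y z : X} {p q : Ultrafilter M}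
    (hq : Tendsto (· • x) (q : Filter M) (𝓝 y)) (hp : Tendsto (· • y) (p : Filter M) (𝓝 z)) :
    Tendsto (· • x) ((p * q : Ultrafilter M) : Filter M) (𝓝 z) := by
  refine tendsto_iff_eventually.2 fun P hP => ?_
  obtain ⟨O, hO, hOopen, hz⟩ := eventually_nhds_iff.1 hP
  refine (Ultrafilter.eventually_mul p q _).2 ?_
  filter_upwards [hp (hOopen.mem_nhds hz)] with s hs
  filter_upwards [(hq.const_smul s) (hOopen.mem_nhds hs)] with t ht
  exact hO _ (mul_smul s t x ▸ ht)

theorem IsAlmostPeriodicPt.exists_idempotent {x : X} (hx : IsAlmostPeriodicPt M x)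
    {L : Set (Ultrafilter M)} (hL : IsMinimalLeftIdeal_s18 L) :
    ∃ p ∈ L, p * p = p ∧ Tendsto (· • x) (p : Filter M) (𝓝 x) := by
  let R : Set (Ultrafilter M) := {p | Tendsto (· • x) (p : Filter M) (𝓝 x)}
  have hcompact : IsCompact (L ∩ R) := ((hL.isClosed Ultrafilter.continuous_mul_left).inter
    (isClosed_setOf_tendsto_ultrafilter _ _)).isCompact
  have hmul : ∀ᵉ (p ∈ L ∩ R) (q ∈ L ∩ R), p * q ∈ L ∩ R := fun p hp q hq =>
    ⟨hL.mul_mem p q hq.1, tendsto_smul_ultrafilter_mul hq.2 hp.2⟩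
  obtain ⟨q, hqL, hq⟩ := hL.exists_ultrafilter_le (F := comap (· • x) (𝓝 x)) fun A hA => by
    obtain ⟨O, hO, hOA⟩ := hA
    exact (hx O hO).mono hOA
  obtain ⟨p, ⟨hpL, hpx⟩, hp⟩ := exists_idempotent_in_compact_subsemigroup
    Ultrafilter.continuous_mul_left (L ∩ R) ⟨q, hqL, tendsto_iff_comap.2 hq⟩ hcompact hmul
  exact ⟨p, hpL, hp, hpx⟩

theorem IsMinimalLeftIdeal_s18.isAlmostPeriodicPt [RegularSpace X] {L : Set (Ultrafilter M)}
    (hL : IsMinimalLeftIdeal_s18 L) {l : Ultrafilter M} (hl : l ∈ L) {x z : X}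
    (hlx : Tendsto (· • z) (l : Filter M) (𝓝 x)) : IsAlmostPeriodicPt M x := by
  intro O hO
  obtain ⟨C, hC, hCclosed, hCO⟩ := exists_mem_nhds_isClosed_subset hO
  refine isSyndetic_of_ultrafilter fun a => ?_
  obtain ⟨b, hb⟩ := hL.exists_mul_eq (a * l) (hL.mul_mem a l hl) l hl
  have hreturn : ∀ᶠ m in ((b * (a * l) : Ultrafilter M) : Filter M), m • z ∈ C := by
    rw [hb]
    exact hlx hC
  obtain ⟨f, hf⟩ := ((Ultrafilter.eventually_mul b (a * l) _).1 hreturn).exists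
  refine ⟨f, mem_of_superset hf fun g hg => hCO ?_⟩
  refine hCclosed.mem_of_tendsto (hlx.const_smul (f * g)) ?_
  filter_upwards [hg] with m hm
  rwa [smul_smul, mul_assoc]

end AlmostPeriodic

section FaceProducts

variable {ι : Type*}

/-- The value at the vertex `ε` of the element `∏ j, (s j)^{(α_j)}` of the face group, where `α_j`
is the upper face in direction `j`. -/
def vertexHom (T : Type*) [CommMonoid T] (ε : Finset ι) : (ι → T) →* T :=
  ∏ j ∈ ε, Pi.evalMonoidHom (fun _ => T) j

variable {T : Type*} [CommMonoid T]

theorem vertexHom_apply (ε : Finset ι) (s : ι → T) : vertexHom T ε s = ∏ j ∈ ε, s j := by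
  simp [vertexHom]

@[simp]
theorem vertexHom_empty : vertexHom T (∅ : Finset ι) = 1 := by
  simp [vertexHom]

theorem vertexHom_mulSingle [DecidableEq ι] (ε : Finset ι) (j : ι) (t : T) :
    vertexHom T ε (Pi.mulSingle j t) = if j ∈ ε then t else 1 := by
  rw [vertexHom_apply, ← Finset.prod_ite_eq' ε j fun _ => t]
  exact Finset.prod_congr rfl fun i _ => Pi.mulSingle_apply j t i

theorem vertexHom_smul_update_empty [DecidableEq ι] {X : Type*} [MulAction T X] (s : ι → T)
    (q : Finset ι → X) (x : X) :
    (fun ε => vertexHom T ε s • Function.update q ∅ x ε) =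
      Function.update (fun ε => vertexHom T ε s • q ε) ∅ x := by
  funext ε
  obtain rfl | hε := eq_or_ne ε ∅
  · simp
  · simp [Function.update_of_ne hε]

theorem exists_ultrafilterMapHom_vertexHom_eq [Finite ι] {p : Ultrafilter T} (hp : p * p = p) :
    ∃ v : Ultrafilter (ι → T), ∀ ε : Finset ι, ε.Nonempty →
      ultrafilterMapHom (vertexHom T ε) v = p := by
  classical
  have : Fintype ι := Fintype.ofFinite ι
  suffices h : ∀ J : Finset ι, ∃ v : Ultrafilter (ι → T), ∀ ε,
      ultrafilterMapHom (vertexHom T ε) v = if Disjoint ε J then pure 1 else p by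
    obtain ⟨v, hv⟩ := h Finset.univ
    refine ⟨v, fun ε hε => ?_⟩
    rw [hv, if_neg]
    rwa [Finset.not_disjoint_iff_nonempty_inter, Finset.inter_univ]
  intro J
  induction J using Finset.induction_on with
  | empty => exact ⟨pure 1, fun ε => by simp [ultrafilterMapHom]⟩
  | insert j J _ ih =>
    obtain ⟨v, hv⟩ := ih
    have hsingle : ∀ ε, ultrafilterMapHom (vertexHom T ε)
        (p.map (Pi.mulSingle j)) = if j ∈ ε then p else pure 1 := by
      intro ε
      change (p.map (Pi.mulSingle j)).map (vertexHom T ε) = _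
      have hcomp : vertexHom T ε ∘ Pi.mulSingle j = fun t => if j ∈ ε then t else 1 :=
        funext fun t => vertexHom_mulSingle ε j t
      rw [Ultrafilter.map_map, hcomp]
      split_ifs
      · exact Ultrafilter.map_id p
      · exact Ultrafilter.coe_inj.1 map_const
    refine ⟨p.map (Pi.mulSingle j) * v, fun ε => ?_⟩
    rw [map_mul, hsingle, hv]
    by_cases h : j ∈ ε <;> by_cases h' : Disjoint ε J <;>
      simp [h, h', hp, pure_one_mul_ultrafilter, ultrafilter_mul_pure_one]

variable {X : Type*} [TopologicalSpace X] [RegularSpace X] [MulAction T X] [ContinuousConstSMul T X]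

theorem IsAlmostPeriodicPt.isSyndetic_vertexHom [Finite ι] {x : X} (hx : IsAlmostPeriodicPt T x)
    {O : Set X} (hO : O ∈ 𝓝 x) :
    IsSyndetic {s : ι → T | ∀ ε : Finset ι, vertexHom T ε s • x ∈ O} := by
  obtain ⟨L, hL⟩ := exists_isMinimalLeftIdeal (S := Ultrafilter T) Ultrafilter.continuous_mul_left
  obtain ⟨p, hpL, hp, hpx⟩ := hx.exists_idempotent hL
  obtain ⟨v, hv⟩ := exists_ultrafilterMapHom_vertexHom_eq (ι := ι) hp
  obtain ⟨C, hC, hCclosed, hCO⟩ := exists_mem_nhds_isClosed_subset hO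
  have htendsto : ∀ u : Ultrafilter (ι → T),
      (∀ ε : Finset ι, ε.Nonempty → ultrafilterMapHom (vertexHom T ε) u = p) →
      ∀ ε, Tendsto (fun s => vertexHom T ε s • x) (u : Filter (ι → T)) (𝓝 x) := by
    intro u hu ε
    obtain rfl | hε := ε.eq_empty_or_nonempty
    · simpa using tendsto_const_nhds
    · rw [← hu ε hε] at hpx
      exact hpx
  refine isSyndetic_of_ultrafilter fun a => ?_
  obtain ⟨b, hb⟩ := hL.exists_map_mul_eq Ultrafilter.continuous_mul_left
    (fun ε : {ε : Finset ι // ε.Nonempty} => ultrafilterMapHom (vertexHom T ε.1)) hpL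
    (fun ε => hv ε.1 ε.2) a
  have hreturn : ∀ᶠ s in ((b * (a * v) : Ultrafilter (ι → T)) : Filter (ι → T)),
      ∀ ε, vertexHom T ε s • x ∈ C :=
    eventually_all.2 fun ε => htendsto _ (fun ε hε => hb ⟨ε, hε⟩) ε hC
  obtain ⟨f, hf⟩ := ((Ultrafilter.eventually_mul b (a * v) _).1 hreturn).exists
  refine ⟨f, mem_of_superset hf fun g hg ε => hCO ?_⟩
  refine hCclosed.mem_of_tendsto ((htendsto v hv ε).const_smul (vertexHom T ε (f * g))) ?_
  filter_upwards [hg] with s hs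
  have := hs ε
  rwa [← mul_assoc, map_mul, mul_smul] at this

end FaceProducts

section UniformReturn

section Reflection

variable {M X : Type*} [Monoid M] [TopologicalSpace X] [MulAction M X]

theorem exists_isAlmostPeriodicPt_forall_mem_closure [CompactSpace X] [RegularSpace X]
    [ContinuousConstSMul M X] {U : ℕ → Set X} (hU : Antitone U) {z : X}
    (hsyn : ∀ n, IsSyndetic {g : M | g • z ∈ U n}) :
    ∃ x, IsAlmostPeriodicPt M x ∧ ∀ n, x ∈ closure (U n) := by
  have : Nonempty X := ⟨z⟩
  obtain ⟨L, hL⟩ := exists_isMinimalLeftIdeal (S := Ultrafilter M) Ultrafilter.continuous_mul_left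
  have hbasis : (⨅ n, 𝓟 {g : M | g • z ∈ U n}).HasBasis (fun _ => True)
      fun n => {g | g • z ∈ U n} :=
    hasBasis_iInf_principal (Antitone.directed_ge fun m n hmn g hg => hU hmn hg)
  obtain ⟨l, hlL, hl⟩ := hL.exists_ultrafilter_le fun A hA => by
    obtain ⟨n, -, hn⟩ := hbasis.mem_iff.1 hA
    exact (hsyn n).mono hn
  have hlim : Tendsto (· • z) (l : Filter M) (𝓝 (l.map (· • z)).lim) :=
    (l.map (· • z)).le_nhds_lim
  exact ⟨_, hL.isAlmostPeriodicPt hlL hlim, fun n =>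
    mem_closure_of_tendsto hlim (hl (hbasis.mem_of_mem trivial))⟩

/-- One step in the construction of a submonoid that reflects the requirement `Ω`: the open set
`U` shrinks to `V`, and the finite set `S` grows to `R` so as to contain the products of `S`, times
at which every orbit visits `V`, and witnesses that `V` meets the requirement for `S`. -/
structure ReflectionStep (Ω : Finset M → Finset M → Set X) (U V : Set X) (S R : Finset M) :
    Prop where
  closure_subset : closure V ⊆ U
  subset : S ⊆ R
  mul_mem : ∀ a ∈ S, ∀ b ∈ S, a * b ∈ R
  exists_smul_mem : ∀ z : X, ∃ t ∈ R, t • z ∈ V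
  exists_subset : ∃ S' ⊆ R, V ⊆ Ω S S'

theorem exists_reflectionStep [CompactSpace X] [RegularSpace X] [ContinuousConstSMul M X]
    [MulAction.IsMinimal M X] {Ω : Finset M → Finset M → Set X} {U : Set X} {S S' : Finset M}
    (hΩ : IsOpen (Ω S S')) (hU : IsOpen U) (hne : (U ∩ Ω S S').Nonempty) :
    ∃ V R, IsOpen V ∧ V.Nonempty ∧ ReflectionStep Ω U V S R := by
  classical
  obtain ⟨x, hx⟩ := hne
  obtain ⟨C, hC, hCclosed, hCsub⟩ := exists_mem_nhds_isClosed_subset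
    ((hU.inter hΩ).mem_nhds hx)
  have hVne : (interior C).Nonempty := ⟨x, mem_interior_iff_mem_nhds.2 hC⟩
  obtain ⟨K, hK⟩ := exists_finset_smul_mem (M := M) isOpen_interior hVne
  refine ⟨interior C, (S ∪ S * S) ∪ (K ∪ S'), isOpen_interior, hVne,
    hCclosed.closure_interior_subset.trans (hCsub.trans inter_subset_left),
    Finset.subset_union_left.trans Finset.subset_union_left, fun a ha b hb => ?_, fun z => ?_,
    S', Finset.subset_union_right.trans Finset.subset_union_right,
    interior_subset.trans (hCsub.trans inter_subset_right)⟩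
  · simp [Finset.mul_mem_mul ha hb]
  · obtain ⟨t, ht, hz⟩ := hK z
    exact ⟨t, by simp [ht], hz⟩

theorem exists_seq_reflectionStep [CompactSpace X] [RegularSpace X] [ContinuousConstSMul M X]
    [MulAction.IsMinimal M X] {Ω : Finset M → Finset M → Set X} (hΩopen : ∀ S S', IsOpen (Ω S S'))
    {O : Set X} (hO : IsOpen O) (hne : O.Nonempty)
    (hΩ : ∀ S, ∀ U ⊆ O, IsOpen U → U.Nonempty → ∃ S', (U ∩ Ω S S').Nonempty) :
    ∃ (U : ℕ → Set X) (S : ℕ → Finset M), U 0 = O ∧ 1 ∈ S 0 ∧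
      ∀ n, ReflectionStep Ω (U n) (U (n + 1)) (S n) (S (n + 1)) := by
  let Stage := {U : Set X // U ⊆ O ∧ IsOpen U ∧ U.Nonempty} × Finset M
  have hstep : ∀ s : Stage, ∃ s' : Stage, ReflectionStep Ω s.1.1 s'.1.1 s.2 s'.2 := by
    rintro ⟨⟨U, hUO, hU, hUne⟩, S⟩
    obtain ⟨S', hS'⟩ := hΩ S U hUO hU hUne
    obtain ⟨V, R, hV, hVne, hVR⟩ := exists_reflectionStep (hΩopen S S') hU hS'
    exact ⟨⟨⟨V, (subset_closure.trans hVR.closure_subset).trans hUO, hV, hVne⟩, R⟩, hVR⟩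
  choose next hnext using hstep
  let s : ℕ → Stage := fun n => next^[n] ⟨⟨O, Subset.rfl, hO, hne⟩, {1}⟩
  refine ⟨fun n => (s n).1.1, fun n => (s n).2, rfl, Finset.mem_singleton_self 1, fun n => ?_⟩
  simpa only [s, Function.iterate_succ_apply'] using hnext (s n)

/-- The union of an increasing sequence of finite sets as a submonoid. -/
def submonoidOfSeq (S : ℕ → Finset M) (hmono : Monotone S) (hone : 1 ∈ S 0)
    (hmul : ∀ n, ∀ a ∈ S n, ∀ b ∈ S n, a * b ∈ S (n + 1)) : Submonoid M where
  carrier := ⋃ n, S n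
  one_mem' := mem_iUnion.2 ⟨0, hone⟩
  mul_mem' ha hb := by
    obtain ⟨m, hm⟩ := mem_iUnion.1 ha
    obtain ⟨n, hn⟩ := mem_iUnion.1 hb
    exact mem_iUnion.2 ⟨max m n + 1, hmul _ _ (hmono (le_max_left m n) hm) _
      (hmono (le_max_right m n) hn)⟩

theorem exists_submonoid_reflecting [CompactSpace X] [RegularSpace X] [ContinuousConstSMul M X]
    [MulAction.IsMinimal M X] {Ω : Finset M → Finset M → Set X} (hΩopen : ∀ S S', IsOpen (Ω S S'))
    (hΩanti : ∀ S', Antitone (Ω · S')) {O : Set X} (hO : IsOpen O) (hne : O.Nonempty)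
    (hΩ : ∀ S, ∀ U ⊆ O, IsOpen U → U.Nonempty → ∃ S', (U ∩ Ω S S').Nonempty) :
    ∃ H : Submonoid M, ∃ x ∈ O, IsAlmostPeriodicPt H x ∧
      ∀ S : Finset M, (S : Set M) ⊆ H → ∃ S' : Finset M, (S' : Set M) ⊆ H ∧ x ∈ Ω S S' := by
  classical
  obtain ⟨U, S, hU0, hS0, hstep⟩ := exists_seq_reflectionStep hΩopen hO hne hΩ
  have hmono : Monotone S := monotone_nat_of_le_succ fun n => (hstep n).subset
  have hanti : Antitone U :=
    antitone_nat_of_succ_le fun n => subset_closure.trans (hstep n).closure_subset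
  let H := submonoidOfSeq S hmono hS0 fun n => (hstep n).mul_mem
  have hSH : ∀ n, (S n : Set M) ⊆ H := fun n => subset_iUnion (fun n => (S n : Set M)) n
  obtain ⟨z, -⟩ := hne
  have : ContinuousConstSMul H X := ⟨fun t => continuous_const_smul (t : M)⟩
  obtain ⟨x, hx, hxU⟩ := exists_isAlmostPeriodicPt_forall_mem_closure (M := H)
    (U := fun n => U (n + 1)) (fun m n h => hanti (Nat.succ_le_succ h)) (z := z) fun n => by
      refine ⟨(S (n + 1)).subtype (· ∈ H), fun g => ?_⟩
      obtain ⟨t, ht, htz⟩ := (hstep n).exists_smul_mem (g • z)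
      exact ⟨⟨t, hSH _ ht⟩, Finset.mem_subtype.2 ht, by simpa [mul_smul] using htz⟩
  refine ⟨H, x, hU0 ▸ (hstep 0).closure_subset (hxU 0), hx, fun F hF => ?_⟩
  obtain ⟨n, hn⟩ := Directed.exists_mem_subset_of_finset_subset_biUnion
    (Monotone.directed_le fun m n h => Finset.coe_subset.2 (hmono h)) hF
  obtain ⟨S', hS', hΩS'⟩ := (hstep n).exists_subset
  exact ⟨S', (Finset.coe_subset.2 hS').trans (hSH _), hΩanti S' (Finset.coe_subset.1 hn)
    (hΩS' ((hstep (n + 1)).closure_subset (hxU (n + 1))))⟩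

end Reflection

variable {ι T X : Type*} [CommMonoid T] [MulAction T X]

/-- The points which some element of `T^ι` with coordinates in `S'` pushes away from `C`, at some
vertex and even after a correction by any element of `T^ι` with coordinates in `S`. -/
def nonreturnSet (ι : Type*) (C : Set X) (S S' : Finset T) : Set X :=
  {x | ∃ g : ι → T, (∀ i, g i ∈ S') ∧ ∀ f : ι → T, (∀ i, f i ∈ S) →
    ∃ ε : Finset ι, vertexHom T ε (f * g) • x ∉ C}

theorem antitone_nonreturnSet (C : Set X) (S' : Finset T) : Antitone (nonreturnSet ι C · S') :=
  fun _ _ h _ ⟨g, hg, hx⟩ => ⟨g, hg, fun f hf => hx f fun i => h (hf i)⟩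

variable [Finite ι] [TopologicalSpace X] [ContinuousConstSMul T X]

theorem isOpen_nonreturnSet {C : Set X} (hC : IsClosed C)
    (S S' : Finset T) : IsOpen (nonreturnSet ι C S S') := by
  have hfinite : {f : ι → T | ∀ i, f i ∈ S}.Finite := Finite.pi' fun _ => S.finite_toSet
  simp only [nonreturnSet, ofPred_exists, ofPred_and]
  refine isOpen_iUnion fun g => isOpen_const.inter ?_
  simp only [ofPred_forall, ofPred_exists]
  refine hfinite.isOpen_biInter fun f _ => isOpen_iUnion fun ε => ?_
  exact hC.isOpen_compl.preimage (continuous_const_smul _)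

theorem IsAlmostPeriodicPt.exists_notMem_nonreturnSet [RegularSpace X]
    {H : Submonoid T} {x : X} (hx : IsAlmostPeriodicPt H x) {C : Set X} (hC : C ∈ 𝓝 x) :
    ∃ S : Finset T, (S : Set T) ⊆ H ∧ ∀ S' : Finset T, (S' : Set T) ⊆ H →
      x ∉ nonreturnSet ι C S S' := by
  have : ContinuousConstSMul H X := ⟨fun t => continuous_const_smul (t : T)⟩
  obtain ⟨K, hK⟩ := hx.isSyndetic_vertexHom (ι := ι) hC
  have hfinite : (⋃ f ∈ K, range fun i => (f i : T)).Finite :=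
    K.finite_toSet.biUnion fun f _ => finite_range _
  refine ⟨hfinite.toFinset, fun t ht => ?_, ?_⟩
  · obtain ⟨f, -, i, rfl⟩ := mem_iUnion₂.1 (hfinite.mem_toFinset.1 ht)
    exact (f i).2
  rintro S' hS' ⟨g, hg, hgx⟩
  lift g to ι → H using fun i => hS' (hg i)
  obtain ⟨f, hf, hfg⟩ := hK g
  obtain ⟨ε, hε⟩ := hgx (fun i => f i) fun i =>
    hfinite.mem_toFinset.2 (mem_iUnion₂.2 ⟨f, hf, mem_range_self i⟩)
  have hcoe : (vertexHom H ε (f * g) : T) =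
      vertexHom T ε ((fun i => (f i : T)) * fun i => (g i : T)) := by
    simp [vertexHom_apply]
  exact hε (hcoe ▸ hfg ε)

theorem exists_isOpen_uniform_return [CompactSpace X] [RegularSpace X]
    [MulAction.IsMinimal T X] {O : Set X} (hO : IsOpen O) (hne : O.Nonempty) :
    ∃ U ⊆ O, IsOpen U ∧ U.Nonempty ∧ ∃ K : Finset (ι → T), ∀ x ∈ U, ∀ g, ∃ f ∈ K,
      ∀ ε : Finset ι, vertexHom T ε (f * g) • x ∈ closure O := by
  by_contra! hbad
  obtain ⟨H, x, hxO, hx, hH⟩ := exists_submonoid_reflecting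
    (isOpen_nonreturnSet (ι := ι) (isClosed_closure (s := O))) (antitone_nonreturnSet _) hO hne
    fun S U hUO hU hUne => by
      have hfinite : {f : ι → T | ∀ i, f i ∈ S}.Finite := Finite.pi' fun _ => S.finite_toSet
      obtain ⟨x, hxU, g, hg⟩ := hbad U hUO hU hUne hfinite.toFinset
      exact ⟨(finite_range g).toFinset, x, hxU, g, by simp, fun f hf =>
        hg f (hfinite.mem_toFinset.2 hf)⟩
  obtain ⟨S, hSH, hS⟩ := hx.exists_notMem_nonreturnSet (ι := ι)
    (mem_of_superset (hO.mem_nhds hxO) subset_closure)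
  obtain ⟨S', hS'H, hxS'⟩ := hH S hSH
  exact hS S' hS'H hxS'

end UniformReturn

end Ultrafilters

section Cubes

variable {T X : Type*} {d : ℕ}

section Group

variable [Group T]

theorem comp_symmDiff_mem_HKgroup (S : Finset (Fin d)) {f : Finset (Fin d) → T}
    (hf : f ∈ HKgroup T d) : (fun ε => f (symmDiff ε S)) ∈ HKgroup T d := by
  induction hf using Subgroup.closure_induction with
  | mem f hf =>
    obtain ⟨t, j, b, rfl⟩ := hf
    refine Subgroup.subset_closure ⟨t, j, xor b (decide (j ∈ S)), funext fun ε => ?_⟩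
    refine if_congr ?_ rfl rfl
    cases b <;> by_cases h1 : j ∈ ε <;> by_cases h2 : j ∈ S <;>
      simp [Finset.mem_symmDiff, h1, h2]
  | one => exact one_mem _
  | mul f g _ _ hf hg => exact mul_mem hf hg
  | inv f _ hf => exact inv_mem hf

variable [TopologicalSpace X] [MulAction T X]

theorem isClosed_cubeQ : IsClosed (cubeQ T X d) := isClosed_closure

theorem isClosed_setOf_update_mem_cubeQ :
    IsClosed {p : X × (Finset (Fin d) → X) | Function.update p.2 ∅ p.1 ∈ cubeQ T X d} :=
  isClosed_cubeQ.preimage (continuous_snd.update ∅ continuous_fst)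

theorem comp_symmDiff_mem_cubeQ (S : Finset (Fin d)) {q : Finset (Fin d) → X}
    (hq : q ∈ cubeQ T X d) : (fun ε => q (symmDiff ε S)) ∈ cubeQ T X d := by
  refine map_mem_closure (f := fun q : Finset (Fin d) → X => fun ε => q (symmDiff ε S))
    (by fun_prop) hq ?_
  rintro _ ⟨f, hf, x, rfl⟩
  exact ⟨_, comp_symmDiff_mem_HKgroup S hf, x, rfl⟩

end Group

variable [CommGroup T]

theorem vertexHom_mem_HKgroup (s : Fin d → T) : (fun ε => vertexHom T ε s) ∈ HKgroup T d := by
  have hprod : (fun ε => vertexHom T ε s) =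
      ∏ j, fun ε : Finset (Fin d) => if j ∈ ε then s j else 1 := by
    funext ε
    simp [vertexHom_apply, Finset.prod_apply]
  rw [hprod]
  exact Subgroup.prod_mem _ fun j _ => Subgroup.subset_closure ⟨s j, j, true, by simp⟩

theorem exists_vertexHom_of_mem_HKgroup {f : Finset (Fin d) → T} (hf : f ∈ HKgroup T d) :
    ∃ (s : Fin d → T) (t : T), ∀ ε, f ε = vertexHom T ε s * t := by
  induction hf using Subgroup.closure_induction with
  | mem f hf =>
    obtain ⟨t, j, b, rfl⟩ := hf
    cases b
    · refine ⟨Pi.mulSingle j t⁻¹, t, fun ε => ?_⟩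
      by_cases h : j ∈ ε <;> simp [vertexHom_mulSingle, h]
    · exact ⟨Pi.mulSingle j t, 1, fun ε => by simp [vertexHom_mulSingle]⟩
  | one => exact ⟨1, 1, fun ε => by simp⟩
  | mul f g _ _ hf hg =>
    obtain ⟨s, t, hs⟩ := hf
    obtain ⟨s', t', hs'⟩ := hg
    exact ⟨s * s', t * t', fun ε => by simp [hs, hs', mul_mul_mul_comm]⟩
  | inv f _ hf =>
    obtain ⟨s, t, hs⟩ := hf
    exact ⟨s⁻¹, t⁻¹, fun ε => by simp [hs, mul_comm]⟩

theorem exists_vertexHom_of_mem_faceGroupStar {f : CubeStar d → T} (hf : f ∈ faceGroupStar T d) :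
    ∃ s : Fin d → T, ∀ ε, f ε = vertexHom T ε.1 s := by
  induction hf using Subgroup.closure_induction with
  | mem f hf =>
    obtain ⟨t, j, rfl⟩ := hf
    exact ⟨Pi.mulSingle j t, fun ε => by simp [vertexHom_mulSingle]⟩
  | one => exact ⟨1, fun ε => by simp⟩
  | mul f g _ _ hf hg =>
    obtain ⟨s, hs⟩ := hf
    obtain ⟨s', hs'⟩ := hg
    exact ⟨s * s', fun ε => by simp [hs, hs']⟩
  | inv f _ hf =>
    obtain ⟨s, hs⟩ := hf
    exact ⟨s⁻¹, fun ε => by simp [hs]⟩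

variable [TopologicalSpace X] [MulAction T X]

theorem cubeQ_eq_closure_range : cubeQ T X d = closure
    (range fun p : (Fin d → T) × X => fun ε => vertexHom T ε p.1 • p.2) := by
  refine congrArg closure (Subset.antisymm ?_ ?_)
  · rintro _ ⟨f, hf, x, rfl⟩
    obtain ⟨s, t, hs⟩ := exists_vertexHom_of_mem_HKgroup hf
    exact ⟨(s, t • x), funext fun ε => by rw [hs, mul_smul]⟩
  · rintro _ ⟨⟨s, x⟩, rfl⟩
    exact ⟨_, vertexHom_mem_HKgroup s, x, rfl⟩

theorem vertexHom_smul_mem_cubeQ (s : Fin d → T) (x : X) :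
    (fun ε => vertexHom T ε s • x) ∈ cubeQ T X d :=
  subset_closure ⟨_, vertexHom_mem_HKgroup s, x, rfl⟩

theorem vertexHom_smul_apply_mem_cubeQ [ContinuousConstSMul T X] (s : Fin d → T)
    {q : Finset (Fin d) → X} (hq : q ∈ cubeQ T X d) :
    (fun ε => vertexHom T ε s • q ε) ∈ cubeQ T X d := by
  refine map_mem_closure (f := fun q : Finset (Fin d) → X => fun ε => vertexHom T ε s • q ε)
    (by fun_prop) hq ?_
  rintro _ ⟨f, hf, x, rfl⟩
  exact ⟨_, mul_mem (vertexHom_mem_HKgroup s) hf, x, funext fun ε => (mul_smul _ _ _).symm⟩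

end Cubes

section Gluing

variable {T X : Type*} {d : ℕ}

/-- The projection of a vertex of the `(d + 1)`-cube to the first `d` directions. -/
def vertexInit (ε : Finset (Fin (d + 1))) : Finset (Fin d) :=
  {j | j.castSucc ∈ ε}

/-- The point of `X^{2^(d+1)}` with `q` on the upper and `q'` on the lower face in the last
direction. -/
def glueFaces (q q' : Finset (Fin d) → X) (ε : Finset (Fin (d + 1))) : X :=
  if Fin.last d ∈ ε then q (vertexInit ε) else q' (vertexInit ε)

theorem vertexInit_nonempty {ε : Finset (Fin (d + 1))} (hε : ε.Nonempty)
    (hlast : Fin.last d ∉ ε) : (vertexInit ε).Nonempty := by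
  obtain ⟨j, hj⟩ := hε
  induction j using Fin.lastCases with
  | last => exact absurd hj hlast
  | cast j => exact ⟨j, by simpa [vertexInit] using hj⟩

theorem update_glueFaces_empty (q q' : Finset (Fin d) → X) (x : X) :
    Function.update (glueFaces q q') ∅ x = glueFaces q (Function.update q' ∅ x) := by
  funext ε
  obtain rfl | hε := ε.eq_empty_or_nonempty
  · simp [glueFaces, vertexInit]
  · by_cases hlast : Fin.last d ∈ ε
    · simp [glueFaces, hlast, hε.ne_empty]
    · simp [glueFaces, hlast, hε.ne_empty, (vertexInit_nonempty hε hlast).ne_empty]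

theorem vertexHom_snoc [CommMonoid T] (s : Fin d → T) (t : T) (ε : Finset (Fin (d + 1))) :
    vertexHom T ε (Fin.snoc (α := fun _ => T) s t) =
      vertexHom T (vertexInit ε) s * if Fin.last d ∈ ε then t else 1 := by
  simp only [vertexHom_apply, vertexInit, Finset.prod_filter]
  rw [← Fintype.prod_ite_mem, Fin.prod_univ_castSucc]
  simp

/-- The pairs of points of `X^{2^d}` that can occur as opposite faces of a cube: the closure of the
pairs obtained by applying one element of the face group to two diagonal points. -/
def oppositeFaces (T X : Type*) [CommMonoid T] [TopologicalSpace X] [MulAction T X] (d : ℕ) :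
    Set ((Finset (Fin d) → X) × (Finset (Fin d) → X)) :=
  closure (range fun p : (Fin d → T) × X × X =>
    (fun ε => vertexHom T ε p.1 • p.2.1, fun ε => vertexHom T ε p.1 • p.2.2))

theorem oppositeFaces_diag [CommMonoid T] [TopologicalSpace X] [MulAction T X]
    {q q' : Finset (Fin d) → X} (h : (q, q') ∈ oppositeFaces T X d) :
    (q, q) ∈ oppositeFaces T X d := by
  refine map_mem_closure (f := fun p => (p.1, p.1)) (by fun_prop) h ?_
  rintro _ ⟨⟨s, x, y⟩, rfl⟩
  exact ⟨(s, x, x), rfl⟩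

variable [CommGroup T] [TopologicalSpace X] [MulAction T X] [ContinuousConstSMul T X]
  [MulAction.IsMinimal T X]

theorem glueFaces_smul_mem_cubeQ (s : Fin d → T) (x y : X) :
    glueFaces (fun ε => vertexHom T ε s • x) (fun ε => vertexHom T ε s • y) ∈
      cubeQ T X (d + 1) := by
  refine isClosed_cubeQ.closure_subset <| map_mem_closure
    (f := fun z => glueFaces (fun ε => vertexHom T ε s • z) fun ε => vertexHom T ε s • y)
    (continuous_pi fun ε => ?_) (MulAction.dense_orbit T y x) ?_
  · unfold glueFaces
    split_ifs <;> fun_prop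
  · rintro _ ⟨t, rfl⟩
    convert vertexHom_smul_mem_cubeQ (Fin.snoc (α := fun _ => T) s t) y using 1
    funext ε
    by_cases hlast : Fin.last d ∈ ε <;> simp [glueFaces, vertexHom_snoc, hlast, mul_smul]

theorem glueFaces_mem_cubeQ {q q' : Finset (Fin d) → X} (h : (q, q') ∈ oppositeFaces T X d) :
    glueFaces q q' ∈ cubeQ T X (d + 1) := by
  refine isClosed_cubeQ.closure_subset <| map_mem_closure
    (f := fun p => glueFaces p.1 p.2) (continuous_pi fun ε => ?_) h ?_
  · unfold glueFaces
    split_ifs <;> fun_prop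
  · rintro _ ⟨⟨s, x, y⟩, rfl⟩
    exact glueFaces_smul_mem_cubeQ s x y

end Gluing

section Interchangeable

variable {T X : Type*} {d : ℕ}

/-- The point of `X^{2^d}` with value `x` at the empty vertex and `a` at the others. -/
def pointedCube (x : X) (a : CubeStar d → X) (ε : Finset (Fin d)) : X :=
  if h : ε.Nonempty then a ⟨ε, h⟩ else x

theorem update_pointedCube_empty (x x' : X) (a : CubeStar d → X) :
    Function.update (pointedCube x a) ∅ x' = pointedCube x' a := by
  funext ε
  obtain rfl | hε := ε.eq_empty_or_nonempty
  · simp [pointedCube]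
  · simp [pointedCube, hε, hε.ne_empty]

theorem pointedCube_smul [CommMonoid T] [MulAction T X] (s : Fin d → T) {f : CubeStar d → T}
    (hf : ∀ ε, f ε = vertexHom T ε.1 s) (x : X) :
    pointedCube x (fun ε => f ε • x) = fun ε => vertexHom T ε s • x := by
  funext ε
  obtain rfl | hε := ε.eq_empty_or_nonempty
  · simp [pointedCube]
  · simp [pointedCube, hε, hf ⟨ε, hε⟩]

theorem continuous_pointedCube [TopologicalSpace X] :
    Continuous fun p : X × (CubeStar d → X) => pointedCube p.1 p.2 := by
  refine continuous_pi fun ε => ?_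
  unfold pointedCube
  split_ifs <;> fun_prop

variable [CommGroup T] [TopologicalSpace X] [MulAction T X]

theorem exists_oppositeFaces_of_mem_RPrel {x x' : X} (h : (x, x') ∈ RPrel (T := T) X d) :
    ∃ q, q ∅ = x ∧ (q, Function.update q ∅ x') ∈ oppositeFaces T X d := by
  obtain ⟨a, ha⟩ := h
  refine ⟨pointedCube x a, by simp [pointedCube], ?_⟩
  rw [update_pointedCube_empty]
  refine map_mem_closure
    (f := Prod.map (fun p => pointedCube p.1 p.2) fun p => pointedCube p.1 p.2)
    (continuous_pointedCube.prodMap continuous_pointedCube) ha ?_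
  rintro _ ⟨y, z, f, hf, rfl⟩
  obtain ⟨s, hs⟩ := exists_vertexHom_of_mem_faceGroupStar hf
  exact ⟨(s, y, z), Prod.ext (pointedCube_smul s hs y).symm (pointedCube_smul s hs z).symm⟩

/-- Interchangeability of `x` and `x'` at a vertex of some cube of dimension `d`. By the symmetries
of the cube the choice of the empty vertex is no restriction. -/
def IsInterchangeable (T : Type*) {X : Type*} [Group T] [TopologicalSpace X] [MulAction T X]
    (d : ℕ) (x x' : X) : Prop :=
  ∃ q ∈ cubeQ T X d, q ∅ = x ∧ Function.update q ∅ x' ∈ cubeQ T X d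

theorem isInterchangeable_of_mem_RPrel [ContinuousConstSMul T X] [MulAction.IsMinimal T X]
    {x x' : X} (h : (x, x') ∈ RPrel (T := T) X d) : IsInterchangeable T (d + 1) x x' := by
  obtain ⟨q, rfl, hq⟩ := exists_oppositeFaces_of_mem_RPrel h
  refine ⟨glueFaces q q, glueFaces_mem_cubeQ (oppositeFaces_diag hq), ?_, ?_⟩
  · simp [glueFaces, vertexInit]
  · rw [update_glueFaces_empty]
    exact glueFaces_mem_cubeQ hq

end Interchangeable

section Saturation

variable {T X : Type*} [CommGroup T] [TopologicalSpace X] [MulAction T X] {d : ℕ}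
  [ContinuousConstSMul T X] [CompactSpace X] [RegularSpace X] [MulAction.IsMinimal T X]

theorem exists_isOpen_cubeQ_return {O : Set X} (hO : IsOpen O) (hne : O.Nonempty) :
    ∃ U ⊆ O, IsOpen U ∧ U.Nonempty ∧ ∀ q ∈ cubeQ T X d, q ∅ ∈ U →
      ∃ f : Fin d → T, ∀ ε, vertexHom T ε f • q ε ∈ closure O := by
  obtain ⟨U, hUO, hU, hUne, K, hK⟩ := exists_isOpen_uniform_return (ι := Fin d) (T := T) hO hne
  refine ⟨U, hUO, hU, hUne, fun q hq hqU => ?_⟩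
  have hreturn : q ∈ ⋃ f ∈ K, ⋂ ε,
      {q : Finset (Fin d) → X | vertexHom T ε f • q ε ∈ closure O} := by
    rw [cubeQ_eq_closure_range] at hq
    refine closure_minimal ?_ ?_ ((hU.preimage (continuous_apply ∅)).inter_closure ⟨hqU, hq⟩)
    · rintro _ ⟨hxU, ⟨g, x⟩, rfl⟩
      obtain ⟨f, hf, h⟩ := hK x (by simpa using hxU) g
      exact mem_biUnion hf (mem_iInter.2 fun ε => by simpa [mul_smul] using h ε)
    · exact isClosed_biUnion_finset fun f _ => isClosed_iInter fun ε =>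
        isClosed_closure.preimage (by fun_prop)
  obtain ⟨f, -, hf⟩ := mem_iUnion₂.1 hreturn
  exact ⟨f, mem_iInter.1 hf⟩

variable {Y : Type*} [TopologicalSpace Y] {π : X → Y}

theorem update_diagonal_mem_cubeQ (hπc : Continuous π) (hπ : IsOpenMap π)
    (hswap : ∀ x x', π x = π x' → IsInterchangeable T d x x') {x x' : X} (hxx' : π x = π x') :
    Function.update (fun _ => x) ∅ x' ∈ cubeQ T X d := by
  have hdiag := (closed_nhds_basis x).pi_self (ι := Finset (Fin d))
  rw [← nhds_pi] at hdiag
  refine isClosed_setOf_update_mem_cubeQ.closure_subset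
    ((mem_closure_iff_nhds_basis ((nhds_basis_opens x').prod_nhds hdiag)).2 ?_)
  rintro ⟨W, I, C⟩ ⟨⟨hx'W, hW⟩, -, hC, hCclosed⟩
  obtain ⟨U, hUO, -, ⟨z, hzU⟩, hU⟩ := exists_isOpen_cubeQ_return (T := T) (d := d)
    (isOpen_interior.inter ((hπ W hW).preimage hπc) : IsOpen (interior C ∩ π ⁻¹' (π '' W)))
    ⟨x, mem_interior_iff_mem_nhds.2 hC, x', hx'W, hxx'.symm⟩
  obtain ⟨-, z', hz'W, hzz'⟩ := hUO hzU
  obtain ⟨q, hq, rfl, hq'⟩ := hswap z z' hzz'.symm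
  obtain ⟨f, hf⟩ := hU q hq hzU
  have hmem := vertexHom_smul_apply_mem_cubeQ f hq'
  rw [vertexHom_smul_update_empty] at hmem
  exact ⟨(z', fun ε => vertexHom T ε f • q ε), hmem, hz'W, fun ε _ =>
    hCclosed.closure_subset_iff.2 (inter_subset_left.trans interior_subset) (hf ε)⟩

theorem update_empty_mem_cubeQ (hπc : Continuous π) (hπ : IsOpenMap π)
    (hswap : ∀ x x', π x = π x' → IsInterchangeable T d x x') {q : Finset (Fin d) → X}
    (hq : q ∈ cubeQ T X d) {x' : X} (hx' : π (q ∅) = π x') :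
    Function.update q ∅ x' ∈ cubeQ T X d := by
  refine isClosed_setOf_update_mem_cubeQ.closure_subset
    ((mem_closure_iff_nhds_basis ((nhds_basis_opens x').prod_nhds (nhds_basis_opens q))).2 ?_)
  rintro ⟨W, V⟩ ⟨⟨hx'W, hW⟩, hqV, hV⟩
  rw [cubeQ_eq_closure_range] at hq
  obtain ⟨_, ⟨hsV, z', hz'W, hz'⟩, ⟨s, z⟩, rfl⟩ := mem_closure_iff.1 hq
    (V ∩ (fun q => π (q ∅)) ⁻¹' (π '' W))
    (hV.inter ((hπ W hW).preimage (by fun_prop))) ⟨hqV, x', hx'W, hx'.symm⟩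
  have hzz' : π z = π z' := by simpa using hz'.symm
  have hmem := vertexHom_smul_apply_mem_cubeQ s (update_diagonal_mem_cubeQ hπc hπ hswap hzz')
  rw [vertexHom_smul_update_empty] at hmem
  exact ⟨(z', fun ε => vertexHom T ε s • z), hmem, hz'W, hsV⟩

theorem update_mem_cubeQ (hπc : Continuous π) (hπ : IsOpenMap π)
    (hswap : ∀ x x', π x = π x' → IsInterchangeable T d x x') {q : Finset (Fin d) → X}
    (hq : q ∈ cubeQ T X d) (S : Finset (Fin d)) {x' : X} (hx' : π (q S) = π x') :
    Function.update q S x' ∈ cubeQ T X d := by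
  have h := comp_symmDiff_mem_cubeQ S <| update_empty_mem_cubeQ hπc hπ hswap
    (comp_symmDiff_mem_cubeQ S hq) (x' := x') (by rwa [← Finset.bot_eq_empty, bot_symmDiff])
  convert h using 1
  funext ε
  obtain rfl | hε := eq_or_ne ε S
  · simp
  · have hne : symmDiff ε S ≠ ∅ := fun h => hε (symmDiff_eq_bot.1 h)
    simp [Function.update_of_ne hε, Function.update_of_ne hne]

theorem mem_cubeQ_of_comp_eq (hπc : Continuous π) (hπ : IsOpenMap π)
    (hswap : ∀ x x', π x = π x' → IsInterchangeable T d x x') {q q' : Finset (Fin d) → X}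
    (hq : q ∈ cubeQ T X d) (hcomp : π ∘ q = π ∘ q') : q' ∈ cubeQ T X d := by
  have hpiecewise : ∀ A : Finset (Finset (Fin d)), A.piecewise q' q ∈ cubeQ T X d := by
    intro A
    induction A using Finset.induction_on with
    | empty => simpa using hq
    | insert S A hS ih =>
      rw [Finset.piecewise_insert]
      exact update_mem_cubeQ hπc hπ hswap ih S (by simpa [hS] using congrFun hcomp S)
  simpa using hpiecewise Finset.univ

end Saturation

theorem cube_saturated_of_open_factor_general {T X Y : Type*} [CommGroup T]
    [TopologicalSpace X] [CompactSpace X] [RegularSpace X] [MulAction T X]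
    [ContinuousConstSMul T X] [MulAction.IsMinimal T X] [TopologicalSpace Y] {π : X → Y}
    (hπc : Continuous π) (hπ : IsOpenMap π) {d : ℕ}
    (hfac : ∀ x x' : X, π x = π x' → (x, x') ∈ RPrel (T := T) X d) :
    (fun q : Finset (Fin (d + 1)) → X => π ∘ q) ⁻¹'
        ((fun q : Finset (Fin (d + 1)) → X => π ∘ q) '' cubeQ T X (d + 1)) =
      cubeQ T X (d + 1) := by
  refine Subset.antisymm ?_ (subset_preimage_image _ _)
  rintro q' ⟨q, hq, hcomp⟩
  exact mem_cubeQ_of_comp_eq hπc hπ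
    (fun x x' h => isInterchangeable_of_mem_RPrel (hfac x x' h)) hq hcomp

/-- If `π : X → Y` is an open factor map of minimal abelian systems such that the
maximal factor of order `d-1` of `X` factors through `Y` (equivalently
`R_π ⊆ RP^[d-1](X)`), then the dynamical cube `Q^[d](X)` is `π^[d]`-saturated. -/
theorem cube_saturated_of_open_factor
    {T X Y : Type*} [CommGroup T]
    [TopologicalSpace X] [CompactSpace X] [T2Space X] [MulAction T X]
    [TopologicalSpace Y] [CompactSpace Y] [T2Space Y] [MulAction T Y]
    (hcX : ∀ t : T, Continuous fun x : X => t • x)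
    (hcY : ∀ t : T, Continuous fun y : Y => t • y)
    (hminX : ∀ x : X, Dense {x' : X | ∃ t : T, x' = t • x})
    (hminY : ∀ y : Y, Dense {y' : Y | ∃ t : T, y' = t • y})
    (π : X → Y) (hπc : Continuous π) (hπs : Function.Surjective π)
    (hπeq : ∀ t : T, ∀ x : X, π (t • x) = t • π x) (hπopen : IsOpenMap π)
    (d : ℕ) (hd : 2 ≤ d)
    (hfac : ∀ x x' : X, π x = π x' → (x, x') ∈ RPrel (T := T) X (d - 1)) :
    (fun q : Finset (Fin d) → X => π ∘ q) ⁻¹'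
        ((fun q : Finset (Fin d) → X => π ∘ q) '' cubeQ T X d) = cubeQ T X d := by
  obtain ⟨e, rfl⟩ : ∃ e, d = e + 1 := ⟨d - 1, by omega⟩
  have : ContinuousConstSMul T X := ⟨hcX⟩
  have : MulAction.IsMinimal T X := ⟨fun x => by
    simpa only [MulAction.orbit, range, eq_comm] using hminX x⟩
  exact cube_saturated_of_open_factor_general hπc hπopen hfac
end

section
/- Let (X,T) be a minimal compact metric system with T finitely generated abelian, having no nontrivial Ind_ap-pairs. Then the factor map from X to its maximal factor of order ∞ is almost one-to-one. -/
/-- An `Ind_ap`-pair: for every `d ≥ 1` and all neighborhoods `U₁, U₂` of the two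
points there is `t ≠ e` such that `{t, t², …, t^d}` is an independence set for
`(U₁, U₂)`. -/
def IsIndApPair (T : Type*) [Group T] {X : Type*} [TopologicalSpace X] [MulAction T X]
    (x₁ x₂ : X) : Prop :=
  ∀ d : ℕ, 1 ≤ d → ∀ U₁ ∈ nhds x₁, ∀ U₂ ∈ nhds x₂,
    ∃ t : T, t ≠ 1 ∧ ∀ s : Fin d → Bool,
      (⋂ j : Fin d, (fun x : X => (t ^ ((j : ℕ) + 1)) • x) ''
        (if s j then U₁ else U₂)).Nonempty

/-!
Let `(x, y) ∈ RP^[∞]` with `x` generic; we want `(x, y)` to be an `Ind_ap`-pair or `x = y`.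
Minimality, through a minimal idempotent of the enveloping semigroup, moves the cubes witnessing
`(x, y) ∈ RP^[d]` so that all their vertices except the base point, which is near `y`, are near `x`.
By the pigeonhole principle the edges of such cubes may be taken in any subgroup of finite index.

It suffices that in every limit of arithmetic progressions an entry `x` may be replaced by `y`: then
every word in `x` and `y` is a limit of progressions, and a progression near the concatenation of
all words of length `d` gives the required independence set.

For a group `G` of families containing enough cubes with base coordinate `i₀`, genericity of `x`
reduces the replacement at `i₀` to the constant configuration, where it is the statement about
cubes above. For progressions, one eliminates the other coordinates in turn. Some progression is
trivial at `k` and translates `i₀` by any prescribed element of a subgroup of finite index. Hence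
the pairs of progressions agreeing at `k`, restricted to the remaining coordinates, have one more
cube direction than the progressions themselves. A replacement for these pairs gives one for
progressions when `x` is generic, because the projection of limit configurations forgetting `k` is
semi-open.
-/

open Filter Function Set TopologicalSpace
open scoped Topology Pointwise

namespace IndAp

section Baire

theorem eventually_residual_mem_of_mem_closure {X ι : Type*} [TopologicalSpace X] [Countable ι]
    {W : ι → Set X} (hW : ∀ b, IsOpen (W b)) :
    ∀ᶠ x in residual X, ∀ b, x ∈ closure (W b) → x ∈ W b := by
  refine eventually_countable_forall.2 fun b => ?_
  have hdense : Dense (frontier (W b))ᶜ := by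
    rw [← interior_eq_empty_iff_dense_compl, ← frontier_compl]
    exact interior_frontier (hW b).isClosed_compl
  filter_upwards [residual_of_dense_open isClosed_frontier.isOpen_compl hdense] with x hx hcl
  by_contra hxb
  exact hx ⟨hcl, by rwa [(hW b).interior_eq]⟩

theorem eventually_residual_mem_closure_range {κ X Z : Type*} [TopologicalSpace X]
    [TopologicalSpace Z] [SecondCountableTopology Z] {φ : κ → X → Z}
    (hφ : ∀ k, Continuous (φ k)) :
    ∀ᶠ x in residual X, ∀ z, (x, z) ∈ closure {p : X × Z | ∃ k, p.2 = φ k p.1} →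
      z ∈ closure (range fun k => φ k x) := by
  have hW (b : countableBasis Z) : IsOpen (⋃ k, φ k ⁻¹' b.1) :=
    isOpen_iUnion fun k => (isOpen_of_mem_countableBasis b.2).preimage (hφ k)
  have := (countable_countableBasis Z).to_subtype
  filter_upwards [eventually_residual_mem_of_mem_closure hW] with x hx z hz
  refine (isBasis_countableBasis Z).mem_closure_iff.2 fun b hb hzb => ?_
  suffices x ∈ closure (⋃ k, φ k ⁻¹' b) by
    obtain ⟨k, hk⟩ := mem_iUnion.1 (hx ⟨b, hb⟩ this)
    exact ⟨φ k x, hk, k, rfl⟩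
  refine mem_closure_iff_nhds.2 fun N hN => ?_
  obtain ⟨⟨x', z'⟩, ⟨hx'N, hz'b⟩, k, hk⟩ := mem_closure_iff_nhds.1 hz (N ×ˢ b)
    (prod_mem_nhds hN ((isOpen_of_mem_countableBasis hb).mem_nhds hzb))
  obtain rfl : z' = φ k x' := hk
  exact ⟨x', hx'N, mem_iUnion.2 ⟨k, hz'b⟩⟩

/-- A map is semi-open if images of nonempty open sets have nonempty interior. -/
def IsSemiopenMap {E F : Type*} [TopologicalSpace E] [TopologicalSpace F] (f : E → F) : Prop :=
  ∀ U : Set E, IsOpen U → U.Nonempty → (interior (f '' U)).Nonempty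

theorem eventually_residual_mem_image_interior_image {E F X : Type*} [TopologicalSpace E]
    [SecondCountableTopology E] [TopologicalSpace F] [TopologicalSpace X] {f : E → F} {g : F → X}
    (hf : IsSemiopenMap f) (hg : IsSemiopenMap g) (hgf : Continuous (g ∘ f)) :
    ∀ᶠ x in residual X, ∀ e, g (f e) = x → ∀ U ∈ 𝓝 e, x ∈ g '' interior (f '' U) := by
  let W (b : countableBasis E) : Set X := interior (g '' interior (f '' b.1))
  have := (countable_countableBasis E).to_subtype
  filter_upwards [eventually_residual_mem_of_mem_closure (W := W) fun _ => isOpen_interior]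
    with _ hx e rfl U hU
  obtain ⟨b, hb, heb, hbU⟩ := (isBasis_countableBasis E).mem_nhds_iff.1 hU
  suffices g (f e) ∈ closure (W ⟨b, hb⟩) from
    image_mono (interior_mono (image_mono hbU)) (interior_subset (hx ⟨b, hb⟩ this))
  refine mem_closure_iff.2 fun N hN heN => ?_
  have hopen : IsOpen (b ∩ (g ∘ f) ⁻¹' N) :=
    (isOpen_of_mem_countableBasis hb).inter (hN.preimage hgf)
  obtain ⟨z, hz⟩ := hg _ isOpen_interior (hf _ hopen ⟨e, heb, heN⟩)
  refine ⟨z, ?_, interior_mono (image_mono (interior_mono (image_mono inter_subset_left))) hz⟩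
  obtain ⟨_, hw, rfl⟩ := interior_subset hz
  obtain ⟨e', he', rfl⟩ := interior_subset hw
  exact he'.2

theorem isSemiopenMap_of_isMinimal {K L E F : Type*} [Group K] [Group L] [MulAction K E]
    [MulAction L F] [TopologicalSpace E] [CompactSpace E] [RegularSpace E]
    [ContinuousConstSMul K E] [MulAction.IsMinimal K E] [TopologicalSpace F] [T2Space F]
    [BaireSpace F] [ContinuousConstSMul L F] {φ : K → L} {f : E → F} (hf : Continuous f)
    (hsurj : Surjective f) (hsmul : ∀ k x, f (k • x) = φ k • f x) : IsSemiopenMap f := by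
  rintro U hU ⟨e, he⟩
  obtain ⟨C, hCe, hC, hCU⟩ := exists_mem_nhds_isClosed_subset (hU.mem_nhds he)
  obtain ⟨s, hs⟩ := isCompact_univ.exists_finite_cover_smul K isOpen_interior
    ⟨e, mem_interior_iff_mem_nhds.2 hCe⟩
  have hclosed : IsClosed (f '' C) := (hC.isCompact.image hf).isClosed
  have hcover : ⋃ k : s, φ k • f '' C = univ := by
    refine eq_univ_of_forall fun y => ?_
    obtain ⟨x, rfl⟩ := hsurj y
    obtain ⟨k, hk, hx⟩ := mem_iUnion₂.1 (hs (mem_univ x))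
    refine mem_iUnion.2 ⟨⟨k, hk⟩, ?_⟩
    obtain ⟨c, hc, rfl⟩ := smul_set_mono interior_subset hx
    exact ⟨f c, mem_image_of_mem f hc, (hsmul k c).symm⟩
  have : Nonempty F := ⟨f e⟩
  obtain ⟨k, hk⟩ := nonempty_interior_of_iUnion_of_closed (fun k : s => hclosed.smul (φ k)) hcover
  rw [interior_smul, smul_set_nonempty] at hk
  exact hk.mono (interior_mono (image_mono hCU))

end Baire

section RightTopologicalSemigroup

variable {I M : Type*} [Semigroup M] [TopologicalSpace M] {S : Set M} {u : M}

theorem mul_mem_closure {A : Set M} (hr : ∀ r : M, Continuous (· * r))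
    (hl : ∀ a ∈ A, Continuous (a * ·)) (hA : ∀ a ∈ A, ∀ b ∈ A, a * b ∈ A) {p q : M}
    (hp : p ∈ closure A) (hq : q ∈ closure A) : p * q ∈ closure A :=
  closure_minimal (t := (· * q) ⁻¹' closure A)
    (fun a ha => map_mem_closure (hl a ha) hq (hA a ha)) (isClosed_closure.preimage (hr q)) hp

/-- An idempotent `u` of a subsemigroup `S` lying in a minimal left ideal of `S`: the left ideal
generated by `u` is also generated by each of its elements `p * u`. -/
structure IsMinimalIdempotent (S : Set M) (u : M) : Prop where
  mem : u ∈ S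
  isIdempotentElem : IsIdempotentElem u
  exists_mul_eq : ∀ p ∈ S, ∃ q ∈ S, q * (p * u) = u

variable [CompactSpace M] [T2Space M]

theorem exists_minimal_leftIdeal (hr : ∀ r : M, Continuous (· * r)) (hS : IsClosed S)
    (hne : S.Nonempty) (hmul : ∀ p ∈ S, ∀ q ∈ S, p * q ∈ S) :
    ∃ L ⊆ S, IsClosed L ∧ L.Nonempty ∧ (∀ p ∈ S, ∀ q ∈ L, p * q ∈ L) ∧
      ∀ q ∈ L, ∀ r ∈ L, ∃ p ∈ S, p * q = r := by
  obtain ⟨L, -, hL⟩ := zorn_superset_nonempty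
    {L : Set M | L ⊆ S ∧ IsClosed L ∧ L.Nonempty ∧ ∀ p ∈ S, ∀ q ∈ L, p * q ∈ L} (by
      intro c hc hchain hcne
      have := hcne.to_subtype
      refine ⟨⋂₀ c, ⟨?_, isClosed_sInter fun s hs => (hc hs).2.1, ?_, fun p hp q hq s hs =>
        (hc hs).2.2.2 p hp q (hq s hs)⟩, fun s hs => sInter_subset_of_mem hs⟩
      · obtain ⟨s, hs⟩ := hcne
        exact (sInter_subset_of_mem hs).trans (hc hs).1
      · exact IsCompact.nonempty_sInter_of_directed_nonempty_isCompact_isClosed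
          (IsChain.directedOn (r := fun s t : Set M => s ⊇ t) hchain.symm)
          (fun s hs => (hc hs).2.2.1) (fun s hs => (hc hs).2.1.isCompact) fun s hs => (hc hs).2.1)
    S ⟨Subset.rfl, hS, hne, hmul⟩
  obtain ⟨hLS, hLc, hLne, hLmul⟩ := hL.prop
  refine ⟨L, hLS, hLc, hLne, hLmul, fun q hq r hrL => ?_⟩
  have hideal : (· * q) '' S ⊆ L := image_subset_iff.2 fun p hp => hLmul p hp q hq
  refine hL.le_of_le ⟨hideal.trans hLS, (hS.isCompact.image (hr q)).isClosed, hne.image _, ?_⟩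
    hideal hrL
  rintro p hp _ ⟨p', hp', rfl⟩
  exact ⟨p * p', hmul p hp p' hp', mul_assoc p p' q⟩

protected theorem IsMinimalIdempotent.const {R : Set (I → M)} (hu : IsMinimalIdempotent S u)
    (hr : ∀ r : M, Continuous (· * r)) (hR : IsClosed R) (hmul : ∀ p ∈ R, ∀ q ∈ R, p * q ∈ R)
    (hRS : ∀ p ∈ R, ∀ i, p i ∈ S) (huR : const I u ∈ R) : IsMinimalIdempotent R (const I u) := by
  refine ⟨huR, funext fun _ => hu.isIdempotentElem, fun p hp => ?_⟩
  have hr' (r : I → M) : Continuous (· * r) :=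
    continuous_pi fun i => (hr (r i)).comp (continuous_apply i)
  have hpu := hmul p hp _ huR
  obtain ⟨_, ⟨s, hs, rfl⟩, hidem⟩ := exists_idempotent_in_compact_subsemigroup hr'
    ((· * (p * const I u)) '' R) ⟨_, mem_image_of_mem _ hp⟩ (hR.isCompact.image (hr' _)) (by
      rintro _ ⟨s, hs, rfl⟩ _ ⟨s', hs', rfl⟩
      exact ⟨s * (p * const I u) * s', hmul _ (hmul s hs _ hpu) s' hs', mul_assoc _ _ _⟩)
  refine ⟨const I u * s, hmul _ huR s hs, funext fun i => ?_⟩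
  set v := s i * (p i * u) with hv
  have hvu : v * u = v := by rw [hv, mul_assoc, mul_assoc, hu.isIdempotentElem.eq]
  obtain ⟨r, -, hru⟩ := hu.exists_mul_eq v (hRS _ (hmul s hs _ hpu) i)
  rw [hvu] at hru
  calc u * s i * (p i * u) = u * v := mul_assoc _ _ _
    _ = r * (v * v) := by rw [← hru, mul_assoc]
    _ = u := by rw [show v * v = v from congrFun hidem i, hru]

end RightTopologicalSemigroup

section EnvelopingSemigroup

instance {X : Type*} [TopologicalSpace X] : TopologicalSpace (Function.End X) :=
  inferInstanceAs (TopologicalSpace (X → X))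

instance {X : Type*} [TopologicalSpace X] [CompactSpace X] : CompactSpace (Function.End X) :=
  inferInstanceAs (CompactSpace (X → X))

instance {X : Type*} [TopologicalSpace X] [T2Space X] : T2Space (Function.End X) :=
  inferInstanceAs (T2Space (X → X))

variable {I T : Type*} [Group T] (X : Type*) [TopologicalSpace X] [MulAction T X]

/-- The Ellis semigroup of `(X, T)`: the pointwise closure of the translations of `X`. -/
def envelopingSemigroup (T : Type*) [Group T] [MulAction T X] : Set (Function.End X) :=
  closure (range (MulAction.toEndHom : T →* Function.End X))

/-- The Ellis semigroup of the coordinatewise action of `G` on `I → X`, recorded as families of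
self-maps of `X`. -/
def piEnvelopingSemigroup (G : Subgroup (I → T)) : Set (I → Function.End X) :=
  closure ((MulAction.toEndHom : T →* Function.End X).compLeft I '' G)

variable {X} {G : Subgroup (I → T)}

theorem continuous_end_apply (x : X) : Continuous fun p : Function.End X => p x :=
  continuous_apply x

theorem continuous_end_mul_right (r : Function.End X) : Continuous (· * r) :=
  continuous_pi fun x => continuous_end_apply (r x)

theorem apply_mem_envelopingSemigroup {p : I → Function.End X} (hp : p ∈ piEnvelopingSemigroup X G)
    (i : I) : p i ∈ envelopingSemigroup X T := by
  refine map_mem_closure (f := fun q : I → Function.End X => q i) (continuous_apply i) hp ?_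
  rintro _ ⟨g, -, rfl⟩
  exact mem_range_self (g i)

theorem image_smul_piEnvelopingSemigroup [CompactSpace X] [T2Space X] (ν : I → X) :
    (fun p : I → Function.End X => p • ν) '' piEnvelopingSemigroup X G =
      closure (MulAction.orbit G ν) := by
  have hcont : Continuous fun p : I → Function.End X => p • ν :=
    continuous_pi fun i => (continuous_end_apply (ν i)).comp (continuous_apply i)
  rw [piEnvelopingSemigroup, ← hcont.isClosedMap.closure_image_eq_of_continuous hcont, image_image]
  congr 1
  ext μ
  exact ⟨fun ⟨g, hg, h⟩ => ⟨⟨g, hg⟩, h⟩, fun ⟨g, h⟩ => ⟨g, g.2, h⟩⟩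

variable [ContinuousConstSMul T X]

theorem continuous_toEndHom_mul (t : T) :
    Continuous fun p : Function.End X => MulAction.toEndHom t * p :=
  continuous_pi fun x => (continuous_end_apply x).const_smul t

theorem mul_mem_envelopingSemigroup {p q : Function.End X} (hp : p ∈ envelopingSemigroup X T)
    (hq : q ∈ envelopingSemigroup X T) : p * q ∈ envelopingSemigroup X T := by
  refine mul_mem_closure continuous_end_mul_right ?_ ?_ hp hq
  · rintro _ ⟨t, rfl⟩
    exact continuous_toEndHom_mul t
  · rintro _ ⟨s, rfl⟩ _ ⟨t, rfl⟩
    exact ⟨s * t, map_mul _ s t⟩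

theorem mul_mem_piEnvelopingSemigroup {p q : I → Function.End X}
    (hp : p ∈ piEnvelopingSemigroup X G) (hq : q ∈ piEnvelopingSemigroup X G) :
    p * q ∈ piEnvelopingSemigroup X G := by
  refine mul_mem_closure (fun r => continuous_pi fun i =>
    (continuous_end_mul_right (r i)).comp (continuous_apply i)) ?_ ?_ hp hq
  · rintro _ ⟨g, -, rfl⟩
    exact continuous_pi fun i => (continuous_toEndHom_mul (g i)).comp (continuous_apply i)
  · rintro _ ⟨g, hg, rfl⟩ _ ⟨h, hh, rfl⟩
    exact ⟨g * h, mul_mem hg hh, map_mul _ g h⟩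

variable [CompactSpace X] [T2Space X] [MulAction.IsMinimal T X]

theorem exists_isMinimalIdempotent_apply_eq (x : X) :
    ∃ u, IsMinimalIdempotent (envelopingSemigroup X T) u ∧ u x = x := by
  obtain ⟨L, hLS, hLc, ⟨p₀, hp₀⟩, hLmul, hLtrans⟩ := exists_minimal_leftIdeal
    (S := envelopingSemigroup X T) continuous_end_mul_right isClosed_closure
    ⟨_, subset_closure (mem_range_self 1)⟩
    fun p hp q hq => mul_mem_envelopingSemigroup hp hq
  have himage : (fun p : Function.End X => p x) '' L = univ := by
    rw [← (hLc.isCompact.image (continuous_end_apply x)).isClosed.closure_eq]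
    refine Dense.closure_eq ((MulAction.dense_orbit T (p₀ x)).mono ?_)
    rintro _ ⟨t, rfl⟩
    exact ⟨_, hLmul _ (subset_closure (mem_range_self t)) p₀ hp₀, rfl⟩
  obtain ⟨q, hq, hqx⟩ := himage ▸ mem_univ x
  obtain ⟨u, ⟨huL, hux⟩, huu⟩ := exists_idempotent_in_compact_subsemigroup
    continuous_end_mul_right (L ∩ {p | p x = x}) ⟨q, hq, hqx⟩
    (hLc.inter (isClosed_eq (continuous_end_apply x) continuous_const)).isCompact
    fun p hp q hq => ⟨hLmul p (hLS hp.1) q hq.1, (congrArg p hq.2).trans hp.2⟩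
  exact ⟨u, ⟨hLS huL, huu, fun p hp => hLtrans _ (hLmul p hp u huL) u huL⟩, hux⟩

theorem const_mem_closure_orbit
    (hG : ∀ p ∈ envelopingSemigroup X T, IsIdempotentElem p →
      const I p ∈ piEnvelopingSemigroup X G)
    {x : X} {ν : I → X} (hν : ν ∈ closure (MulAction.orbit G (const I x))) :
    const I x ∈ closure (MulAction.orbit G ν) := by
  obtain ⟨u, hu, hux⟩ := exists_isMinimalIdempotent_apply_eq (T := T) x
  have huG := hu.const continuous_end_mul_right isClosed_closure
    (fun p hp q hq => mul_mem_piEnvelopingSemigroup hp hq)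
    (fun p hp => apply_mem_envelopingSemigroup hp) (hG u hu.mem hu.isIdempotentElem)
  have hfix : const I u • const I x = const I x := funext fun _ => hux
  rw [← image_smul_piEnvelopingSemigroup] at hν ⊢
  obtain ⟨p, hp, rfl⟩ := hν
  obtain ⟨q, hq, hqp⟩ := huG.exists_mul_eq p hp
  refine ⟨q, hq, ?_⟩
  calc q • p • const I x = (q * (p * const I u)) • const I x := by
        rw [mul_smul, mul_smul, hfix]
    _ = const I x := by rw [hqp, hfix]

end EnvelopingSemigroup

section Configurations

variable {I T X : Type*} [Group T] [TopologicalSpace X] [MulAction T X] [ContinuousConstSMul T X]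

instance : ContinuousConstSMul (I → T) (I → X) :=
  ⟨fun g => continuous_pi fun i => (continuous_apply i).const_smul (g i)⟩

/-- The closed set of configurations `(g i • x)ᵢ` with `g ∈ G` and `x ∈ X`. For the group of
families `(s * t ^ j)ⱼ` this is the closure of the arithmetic progressions `N_d(X)`. -/
def configurations (X : Type*) [TopologicalSpace X] [MulAction T X] [ContinuousConstSMul T X]
    (G : Subgroup (I → T)) : SubMulAction G (I → X) where
  carrier := closure {ν | ∃ g ∈ G, ∃ x : X, g • const I x = ν}
  smul_mem' := by
    rintro ⟨g, hg⟩ ν hν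
    refine map_mem_closure (continuous_const_smul g) hν ?_
    rintro _ ⟨h, hh, x, rfl⟩
    exact ⟨g * h, mul_mem hg hh, x, mul_smul g h _⟩

instance {G : Subgroup (I → T)} : ContinuousConstSMul G (configurations X G) :=
  ⟨fun g => ((continuous_const_smul g.1).comp continuous_subtype_val).subtype_mk _⟩

/-- In every configuration whose value at `i₀` is `x`, this value may be replaced by `y`. -/
def Exchangeable [DecidableEq I] (G : Subgroup (I → T)) (i₀ : I) (x y : X) : Prop :=
  ∀ ν ∈ configurations X G, ν i₀ = x → update ν i₀ y ∈ configurations X G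

/-- The homomorphism restricting families indexed by `I` to `S`. -/
def restrictHom (T : Type*) [Group T] (S : Set I) : (I → T) →* (S → T) where
  toFun := S.domRestrict
  map_one' := rfl
  map_mul' _ _ := rfl

/-- The pairs of members of `G` agreeing outside `S`, restricted to `S`. -/
def double (G : Subgroup (I → T)) (S : Set I) : Subgroup (S ⊕ S → T) where
  carrier := {f | ∃ g ∈ G, ∃ g' ∈ G,
    EqOn g g' Sᶜ ∧ f = Sum.elim (S.domRestrict g) (S.domRestrict g')}
  one_mem' := ⟨1, one_mem G, 1, one_mem G, eqOn_refl 1 _, by ext (i | i) <;> rfl⟩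
  mul_mem' := by
    rintro _ _ ⟨g, hg, g', hg', hgg', rfl⟩ ⟨h, hh, h', hh', hhh', rfl⟩
    exact ⟨g * h, mul_mem hg hh, g' * h', mul_mem hg' hh',
      fun i hi => congrArg₂ (· * ·) (hgg' hi) (hhh' hi), by ext (i | i) <;> rfl⟩
  inv_mem' := by
    rintro _ ⟨g, hg, g', hg', hgg', rfl⟩
    exact ⟨g⁻¹, inv_mem hg, g'⁻¹, inv_mem hg', fun i hi => congrArg (·⁻¹) (hgg' hi),
      by ext (i | i) <;> rfl⟩

variable {G : Subgroup (I → T)}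

theorem isClosed_configurations : IsClosed (configurations X G : Set (I → X)) :=
  isClosed_closure

theorem smul_const_mem_configurations {g : I → T} (hg : g ∈ G) (x : X) :
    g • const I x ∈ configurations X G :=
  subset_closure ⟨g, hg, x, rfl⟩

theorem const_mem_configurations (x : X) : const I x ∈ configurations X G := by
  simpa using smul_const_mem_configurations (one_mem G) x

theorem configurations_induction {Z : Type*} [TopologicalSpace Z] {f : (I → X) → Z}
    (hf : Continuous f) {C : Set Z} (hC : IsClosed C)
    (h : ∀ g ∈ G, ∀ x, f (g • const I x) ∈ C) {ν : I → X} (hν : ν ∈ configurations X G) :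
    f ν ∈ C := by
  refine closure_minimal ?_ (hC.preimage hf) hν
  rintro _ ⟨g, hg, x, rfl⟩
  exact h g hg x

theorem restrict_mem_configurations (S : Set I) {ν : I → X} (hν : ν ∈ configurations X G) :
    S.domRestrict ν ∈ configurations X (G.map (restrictHom T S)) :=
  configurations_induction (f := S.domRestrict)
    (continuous_pi fun i => continuous_apply i.1) isClosed_configurations
    (fun _ hg x => smul_const_mem_configurations (Subgroup.mem_map_of_mem (restrictHom T S) hg) x)
    hν

theorem elim_restrict_mem_configurations_double (S : Set I) {ν : I → X}
    (hν : ν ∈ configurations X G) :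
    Sum.elim (S.domRestrict ν) (S.domRestrict ν) ∈ configurations X (double G S) := by
  have hcont : Continuous fun ν : I → X => Sum.elim (S.domRestrict ν) (S.domRestrict ν) :=
    continuous_pi (by rintro (i | i) <;> exact continuous_apply i.1)
  refine configurations_induction hcont isClosed_configurations (fun g hg x => ?_) hν
  have hmem : Sum.elim (S.domRestrict g) (S.domRestrict g) ∈ double G S :=
    ⟨g, hg, g, hg, eqOn_refl g _, rfl⟩
  have heq : Sum.elim (S.domRestrict g) (S.domRestrict g) • const (S ⊕ S) x =
      Sum.elim (S.domRestrict (g • const I x)) (S.domRestrict (g • const I x)) := by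
    ext (i | i) <;> rfl
  exact heq ▸ smul_const_mem_configurations hmem x

/-- The restriction of configurations to the coordinates in `S`. -/
def restrictConfigurations (G : Subgroup (I → T)) (S : Set I) :
    configurations X G → configurations X (G.map (restrictHom T S)) :=
  Subtype.map S.domRestrict fun _ => restrict_mem_configurations S

theorem exists_mem_configurations_of_exchangeable_double [Finite I] [DecidableEq I] {S : Set I}
    {i₀ : S} {x y : X} (hxy : Exchangeable (double G S) (Sum.inl i₀) x y) {V : I → Set X}
    (hV : ∀ i, IsOpen (V i)) (hy : y ∈ V i₀)
    (hx : x ∈ (fun ξ => ξ.1 i₀) '' interior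
      (restrictConfigurations G S '' {μ | ∀ i, i ≠ i₀.1 → μ.1 i ∈ V i})) :
    ∃ μ ∈ configurations X G, ∀ i, μ i ∈ V i := by
  obtain ⟨_, hξ, rfl⟩ := hx
  obtain ⟨A, hA, hAU⟩ := isOpen_induced_iff.1 (isOpen_interior
    (s := restrictConfigurations G S '' {μ | ∀ i, i ≠ i₀.1 → μ.1 i ∈ V i}))
  obtain ⟨ξ, hξV, rfl⟩ := interior_subset hξ
  have hξA : S.domRestrict ξ.1 ∈ A := by
    rwa [← hAU] at hξ
  have hopen : IsOpen {c : S ⊕ S → X | (∀ i, c (Sum.inl i) ∈ V i.1) ∧ c ∘ Sum.inr ∈ A} := by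
    refine .inter ?_ (hA.preimage (continuous_pi fun i => continuous_apply (Sum.inr i)))
    change IsOpen {c : S ⊕ S → X | ∀ i, c (Sum.inl i) ∈ V i.1}
    rw [ofPred_forall]
    exact isOpen_iInter_of_finite fun i => (hV i).preimage (continuous_apply (Sum.inl i))
  obtain ⟨_, ⟨hgV, hgA⟩, _, ⟨g, hg, g', hg', hgg', rfl⟩, z, rfl⟩ := mem_closure_iff.1
    (hxy _ (elim_restrict_mem_configurations_double S ξ.2) rfl) _ hopen
    ⟨fun i => by
      rcases eq_or_ne i i₀ with rfl | hi
      · simpa using hy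
      · simpa [hi] using hξV i (Subtype.coe_ne_coe.2 hi),
      by rwa [Sum.update_elim_inl, Sum.elim_comp_inr]⟩
  have hg'S : S.domRestrict (g' • const I z) ∈ configurations X (G.map (restrictHom T S)) :=
    restrict_mem_configurations S (smul_const_mem_configurations hg' z)
  have hg'A : (⟨_, hg'S⟩ : configurations X (G.map (restrictHom T S))) ∈ Subtype.val ⁻¹' A := hgA
  rw [hAU] at hg'A
  obtain ⟨μ, hμV, hμ⟩ := interior_subset hg'A
  refine ⟨g • g'⁻¹ • μ.1,
    SubMulAction.smul_mem _ ⟨g, hg⟩ (SubMulAction.smul_mem _ ⟨g'⁻¹, inv_mem hg'⟩ μ.2),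
    fun i => ?_⟩
  by_cases hi : i ∈ S
  · have hμi : μ.1 i = g' i • z := congrFun (congrArg Subtype.val hμ) ⟨i, hi⟩
    simpa [hμi] using hgV ⟨i, hi⟩
  · simpa [hgg' hi] using hμV i fun h => hi (h ▸ i₀.2)

variable [CompactSpace X]

instance : CompactSpace (configurations X G) :=
  isCompact_iff_compactSpace.1 isClosed_configurations.isCompact

variable [T2Space X]

theorem exists_restrict_eq_of_mem_configurations {S : Set I} {μ : S → X}
    (hμ : μ ∈ configurations X (G.map (restrictHom T S))) :
    ∃ ν ∈ configurations X G, S.domRestrict ν = μ := by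
  have hcont : Continuous (S.domRestrict : (I → X) → S → X) :=
    continuous_pi fun i => continuous_apply i.1
  refine configurations_induction (f := id) continuous_id
    (isClosed_configurations.isCompact.image hcont).isClosed ?_ hμ
  rintro _ ⟨g, hg, rfl⟩ x
  exact ⟨_, smul_const_mem_configurations hg x, rfl⟩

variable [MulAction.IsMinimal T X]

theorem const_mem_closure_orbit_of_mem_configurations (hG : ∀ t, const I t ∈ G) (x : X)
    {ν : I → X} (hν : ν ∈ configurations X G) :
    const I x ∈ closure (MulAction.orbit G ν) := by
  refine const_mem_closure_orbit (fun p hp _ => ?_) ?_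
  · refine map_mem_closure (f := const I) (by fun_prop) hp ?_
    rintro _ ⟨t, rfl⟩
    exact ⟨const I t, hG t, rfl⟩
  · refine configurations_induction (f := id) continuous_id isClosed_closure (fun g hg y => ?_) hν
    refine map_mem_closure (f := fun z => g • const I z) (by fun_prop)
      (MulAction.dense_orbit T x y) ?_
    rintro _ ⟨t, rfl⟩
    exact ⟨⟨g * const I t, mul_mem hg (hG t)⟩, mul_smul g (const I t) _⟩

theorem isMinimal_configurations (hG : ∀ t, const I t ∈ G) :
    MulAction.IsMinimal G (configurations X G) := by
  refine ⟨fun ν => Subtype.dense_iff.2 (closure_minimal ?_ isClosed_closure)⟩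
  rintro _ ⟨g, hg, x, rfl⟩
  refine map_mem_closure (continuous_const_smul g)
    (const_mem_closure_orbit_of_mem_configurations hG x ν.2) ?_
  rintro _ ⟨h, rfl⟩
  exact ⟨(⟨g, hg⟩ * h) • ν, ⟨_, rfl⟩, mul_smul g h.1 ν.1⟩

theorem isSemiopenMap_restrict (hG : ∀ t, const I t ∈ G) (S : Set I) :
    IsSemiopenMap (restrictConfigurations (X := X) G S) := by
  have := isMinimal_configurations (X := X) hG
  refine isSemiopenMap_of_isMinimal (K := G) (φ := (restrictHom T S).subgroupMap G)
    ((continuous_pi fun i => continuous_apply i.1).subtype_map _) ?_ fun _ _ => rfl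
  rintro ⟨μ, hμ⟩
  obtain ⟨ν, hν, rfl⟩ := exists_restrict_eq_of_mem_configurations hμ
  exact ⟨⟨ν, hν⟩, rfl⟩

theorem isSemiopenMap_eval (hG : ∀ t, const I t ∈ G) (i : I) :
    IsSemiopenMap (fun ν : configurations X G => ν.1 i) := by
  have := isMinimal_configurations (X := X) hG
  exact isSemiopenMap_of_isMinimal (K := G) (φ := fun g => g.1 i)
    ((continuous_apply i).comp continuous_subtype_val)
    (fun x => ⟨⟨_, const_mem_configurations x⟩, rfl⟩) fun _ _ => rfl

theorem eventually_residual_exchangeable_of_double [SecondCountableTopology X] [Finite I]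
    [DecidableEq I] (hG : ∀ t, const I t ∈ G) (S : Set I) (i₀ : S) :
    ∀ᶠ x in residual X, ∀ y,
      Exchangeable (double G S) (Sum.inl i₀) x y → Exchangeable G i₀.1 x y := by
  classical
  have hG' : ∀ t, const S t ∈ G.map (restrictHom T S) := fun t => ⟨const I t, hG t, rfl⟩
  have : SecondCountableTopology (configurations X G) := Subtype.secondCountableTopology _
  filter_upwards [eventually_residual_mem_image_interior_image (isSemiopenMap_restrict hG S)
    (isSemiopenMap_eval hG' i₀) ((continuous_apply i₀.1).comp continuous_subtype_val)]
    with x hx y hxy ν hν hνx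
  rw [← SetLike.mem_coe, ← isClosed_configurations.closure_eq]
  refine mem_closure_iff.2 fun O hO hνO => ?_
  obtain ⟨V, hV, hVO⟩ := isOpen_pi_iff'.1 hO _ hνO
  have hνV : ∀ᶠ μ : configurations X G in 𝓝 ⟨ν, hν⟩, ∀ i, i ≠ i₀.1 → μ.1 i ∈ V i :=
    eventually_all.2 fun i => eventually_imp_distrib_left.2 fun hi =>
      ((continuous_apply i).comp continuous_subtype_val).continuousAt.eventually_mem
        ((hV i).1.mem_nhds (by simpa [hi] using (hV i).2))
  obtain ⟨μ, hμ, hμV⟩ := exists_mem_configurations_of_exchangeable_double hxy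
    (fun i => (hV i).1) (by simpa using (hV i₀).2) (hx ⟨ν, hν⟩ hνx _ hνV)
  exact ⟨μ, hVO fun i _ => hμV i, hμ⟩

end Configurations

section CubeProximal

/-- The points of an `ι`-dimensional cube based near `y`, other than the base point itself, can be
made arbitrarily close to `x`. -/
def CubeProximal (T ι : Type*) [CommMonoid T] {X : Type*} [TopologicalSpace X] [MulAction T X]
    (x y : X) : Prop :=
  ∀ U ∈ 𝓝 x, ∀ V ∈ 𝓝 y, ∃ y' ∈ V, ∃ t : ι → T,
    ∀ ε : Finset ι, ε.Nonempty → (∏ j ∈ ε, t j) • y' ∈ U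

theorem CubeProximal.of_embedding {T ι κ X : Type*} [CommMonoid T] [TopologicalSpace X]
    [MulAction T X] {x y : X} (h : CubeProximal T κ x y) (e : ι ↪ κ) : CubeProximal T ι x y := by
  intro U hU V hV
  obtain ⟨y', hy', t, ht⟩ := h U hU V hV
  refine ⟨y', hy', t ∘ e, fun ε hε => ?_⟩
  simpa using ht (ε.map e) (hε.map)

theorem exists_prod_mem_of_index {T : Type*} [CommGroup T] (P : Subgroup T) [P.FiniteIndex]
    (f : Fin P.index → T) : ∃ s : Finset (Fin P.index), s.Nonempty ∧ ∏ j ∈ s, f j ∈ P := by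
  have : Fintype (T ⧸ P) := Fintype.ofFinite _
  let initial (i : Fin (P.index + 1)) : Finset (Fin P.index) := {j | j.castSucc < i}
  obtain ⟨a, b, hab, heq⟩ := Fintype.exists_ne_map_eq_of_card_lt
    (fun i => ((∏ j ∈ initial i, f j : T) : T ⧸ P))
    (by rw [Fintype.card_fin, Subgroup.index_eq_card, Nat.card_eq_fintype_card]; lia)
  wlog hlt : a < b generalizing a b
  · exact this b a hab.symm heq.symm (hab.lt_or_gt.resolve_left hlt)
  have hsub : initial a ⊆ initial b := fun j hj => by
    simp only [initial, Finset.mem_filter_univ] at hj ⊢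
    exact hj.trans hlt
  refine ⟨initial b \ initial a, ⟨a.castLT (by lia), by simpa [initial] using hlt⟩, ?_⟩
  rw [← mul_inv_cancel_right (∏ j ∈ initial b \ initial a, f j) (∏ j ∈ initial a, f j),
    Finset.prod_sdiff hsub, mul_comm]
  exact QuotientGroup.eq.1 heq

theorem CubeProximal.of_finiteIndex {T ι X : Type*} [CommGroup T] [TopologicalSpace X]
    [MulAction T X] {P : Subgroup T} [P.FiniteIndex] {x y : X}
    (h : CubeProximal T ((_ : ι) × Fin P.index) x y) : CubeProximal P ι x y := by
  intro U hU V hV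
  obtain ⟨y', hy', t, ht⟩ := h U hU V hV
  choose s hs hsP using fun i => exists_prod_mem_of_index P fun j => t ⟨i, j⟩
  refine ⟨y', hy', fun i => ⟨_, hsP i⟩, fun ε ⟨i, hi⟩ => ?_⟩
  obtain ⟨j, hj⟩ := hs i
  have := ht (ε.sigma s) ⟨⟨i, j⟩, Finset.mem_sigma.2 ⟨hi, hj⟩⟩
  rw [Finset.prod_sigma] at this
  simpa [Subgroup.smul_def] using this

end CubeProximal

section FaceGroup

variable {T X : Type*} [CommGroup T] {d : ℕ}

instance : Finite (CubeStar d) := inferInstanceAs (Finite {ε : Finset (Fin d) // ε.Nonempty})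

theorem exists_prod_of_mem_faceGroupStar {f : CubeStar d → T} (hf : f ∈ faceGroupStar T d) :
    ∃ t : Fin d → T, ∀ ε : CubeStar d, f ε = ∏ j ∈ ε.1, t j := by
  induction hf using Subgroup.closure_induction with
  | mem f hf =>
    obtain ⟨t, j, rfl⟩ := hf
    exact ⟨Pi.mulSingle j t, fun ε => (Finset.prod_pi_mulSingle' j t ε.1).symm⟩
  | one => exact ⟨1, by simp⟩
  | mul f g _ _ hf hg =>
    obtain ⟨t, ht⟩ := hf
    obtain ⟨s, hs⟩ := hg
    exact ⟨t * s, fun ε => by simp [ht, hs, Finset.prod_mul_distrib]⟩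
  | inv f _ hf =>
    obtain ⟨t, ht⟩ := hf
    exact ⟨t⁻¹, fun ε => by simp [ht]⟩

variable [TopologicalSpace X] [MulAction T X]

theorem face_mem_piEnvelopingSemigroup {p : Function.End X} (hp : p ∈ envelopingSemigroup X T)
    (j : Fin d) : (fun ε : CubeStar d => if j ∈ ε.1 then p else 1) ∈
      piEnvelopingSemigroup X (faceGroupStar T d) := by
  have hcont : Continuous fun (p : Function.End X) (ε : CubeStar d) => if j ∈ ε.1 then p else 1 :=
    continuous_pi fun ε => by
      split_ifs
      · exact continuous_id
      · exact continuous_const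
  refine map_mem_closure hcont hp ?_
  rintro _ ⟨t, rfl⟩
  refine ⟨_, Subgroup.subset_closure ⟨t, j, rfl⟩, funext fun ε => ?_⟩
  by_cases h : j ∈ ε.1 <;> simp [h]

variable [ContinuousConstSMul T X]

theorem const_mem_piEnvelopingSemigroup_faceGroupStar {p : Function.End X}
    (hp : p ∈ envelopingSemigroup X T) (hidem : IsIdempotentElem p) :
    const (CubeStar d) p ∈ piEnvelopingSemigroup X (faceGroupStar T d) := by
  have hunion (s : Finset (Fin d)) :
      (fun ε : CubeStar d => if ∃ j ∈ s, j ∈ ε.1 then p else 1) ∈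
        piEnvelopingSemigroup X (faceGroupStar T d) := by
    induction s using Finset.induction_on with
    | empty => exact subset_closure ⟨1, one_mem _, by ext; simp⟩
    | insert j s _ ih =>
      convert mul_mem_piEnvelopingSemigroup (face_mem_piEnvelopingSemigroup hp j) ih using 1
      funext ε
      by_cases hj : j ∈ ε.1 <;> by_cases hs : ∃ j ∈ s, j ∈ ε.1 <;> simp [hj, hs, hidem.eq]
  convert hunion Finset.univ using 1
  funext ε
  have : ∃ j, j ∈ ε.1 := ε.2
  simp [this]

theorem cubeProximal_of_mem_closure {x y : X} {a : CubeStar d → X}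
    (hx : const (CubeStar d) x ∈ closure (MulAction.orbit (faceGroupStar T d) a))
    (hy : (y, a) ∈ closure {q : X × (CubeStar d → X) |
      ∃ f ∈ faceGroupStar T d, q.2 = f • const _ q.1}) :
    CubeProximal T (Fin d) x y := by
  intro U hU V hV
  have hbox : (univ.pi fun _ => interior U) ∈ 𝓝 (const (CubeStar d) x) :=
    set_pi_mem_nhds finite_univ fun _ _ => interior_mem_nhds.2 hU
  obtain ⟨_, hfU, f₀, rfl⟩ := mem_closure_iff_nhds.1 hx _ hbox
  have hopen : IsOpen (univ.pi fun _ : CubeStar d => interior U) :=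
    isOpen_set_pi finite_univ fun _ _ => isOpen_interior
  obtain ⟨⟨y', z⟩, ⟨hy'V, hfy'⟩, f, hf, hz⟩ := mem_closure_iff_nhds.1 hy
    (V ×ˢ ((f₀.1 • ·) ⁻¹' univ.pi fun _ => interior U))
    (prod_mem_nhds hV ((hopen.preimage (continuous_const_smul f₀.1)).mem_nhds hfU))
  obtain rfl : z = f • const _ y' := hz
  obtain ⟨t, ht⟩ := exists_prod_of_mem_faceGroupStar (mul_mem f₀.2 hf)
  refine ⟨y', hy'V, t, fun ε hε => ?_⟩
  have hmem : f₀.1 • f • const (CubeStar d) y' ∈ univ.pi fun _ => interior U := hfy'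
  rw [smul_smul] at hmem
  exact ht ⟨ε, hε⟩ ▸ interior_subset (hmem ⟨ε, hε⟩ (mem_univ _))

variable [CompactSpace X] [T2Space X] [SecondCountableTopology X] [MulAction.IsMinimal T X]

theorem eventually_residual_cubeProximal_of_mem_RPrel (d : ℕ) :
    ∀ᶠ x in residual X, ∀ y, (x, y) ∈ RPrel (T := T) X d → CubeProximal T (Fin d) x y := by
  filter_upwards [eventually_residual_mem_closure_range
    (φ := fun (f : faceGroupStar T d) (x : X) => f.1 • const (CubeStar d) x)
    fun f => (continuous_pi fun _ => continuous_id).const_smul f.1] with x hx y ⟨a, ha⟩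
  refine cubeProximal_of_mem_closure (const_mem_closure_orbit
    (fun p hp hidem => const_mem_piEnvelopingSemigroup_faceGroupStar hp hidem) (hx a ?_)) ?_
  · refine map_mem_closure
      (f := fun q : (X × (CubeStar d → X)) × (X × (CubeStar d → X)) => q.1) continuous_fst ha ?_
    rintro _ ⟨x', _, f, hf, rfl⟩
    exact ⟨⟨f, hf⟩, rfl⟩
  · refine map_mem_closure
      (f := fun q : (X × (CubeStar d → X)) × (X × (CubeStar d → X)) => q.2) continuous_snd ha ?_
    rintro _ ⟨_, y', f, hf, rfl⟩
    exact ⟨f, hf, rfl⟩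

theorem eventually_residual_cubeProximal_of_finiteIndex (P : Subgroup T) [P.FiniteIndex]
    (ι : Type*) [Finite ι] :
    ∀ᶠ x in residual X, ∀ y, (∀ d, 1 ≤ d → (x, y) ∈ RPrel (T := T) X d) →
      CubeProximal P ι x y := by
  let n := Nat.card ((_ : ι) × Fin P.index)
  filter_upwards [eventually_residual_cubeProximal_of_mem_RPrel (T := T) (n + 1)] with x hx y hxy
  exact ((hx y (hxy _ n.succ_pos)).of_embedding
    ((Finite.equivFin _).toEmbedding.trans Fin.castSuccEmb)).of_finiteIndex

end FaceGroup

section Freezing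

variable {I T X : Type*}

theorem eventually_residual_exchangeable_of_update_const_mem [Countable I]
    [DecidableEq I] [Group T] [TopologicalSpace X] [SecondCountableTopology X] [MulAction T X]
    [ContinuousConstSMul T X] {G : Subgroup (I → T)} (hG : ∀ t, const I t ∈ G) (i₀ : I) :
    ∀ᶠ x in residual X, ∀ y,
      update (const I x) i₀ y ∈ configurations X G → Exchangeable G i₀ x y := by
  filter_upwards [eventually_residual_mem_closure_range
    (φ := fun (f : {f // f ∈ G ∧ f i₀ = 1}) (x : X) => f.1 • const I x)
    fun f => (continuous_pi fun _ => continuous_id).const_smul f.1] with x hx y hy ν hν hνx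
  have hνcl : (x, ν) ∈ closure
      {p : X × (I → X) | ∃ f : {f // f ∈ G ∧ f i₀ = 1}, p.2 = f.1 • const I p.1} := by
    rw [← hνx]
    refine configurations_induction (f := fun ν => (ν i₀, ν)) (by fun_prop) isClosed_closure
      (fun g hg z => subset_closure ?_) hν
    refine ⟨⟨g * const I (g i₀)⁻¹, mul_mem hg (hG _), by simp⟩, ?_⟩
    ext i
    simp [mul_smul]
  refine closure_minimal ?_ (isClosed_configurations.preimage
    (continuous_id.update i₀ continuous_const)) (hx ν hνcl)
  rintro _ ⟨⟨f, hf, hfi₀⟩, rfl⟩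
  have hupdate : update (f • const I x) i₀ y = f • update (const I x) i₀ y := by
    ext i
    rcases eq_or_ne i i₀ with rfl | hi
    · simp [hfi₀]
    · simp [hi]
  have hmem : f • update (const I x) i₀ y ∈ configurations X G :=
    SubMulAction.smul_mem _ (⟨f, hf⟩ : G) hy
  rwa [← hupdate] at hmem

/-- The data of the induction eliminating the coordinate classes in `R` one at a time: the members
of `G` realize on the class of `i₀` all cubes over `P` with vertices `ε i` and base point `i₀`,
and each class in `R` can be fixed while the class of `i₀` is translated by any member of `P`.
Directions of cubes and labels of classes share the type `κ`, because eliminating the class `k`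
creates the cube direction `k`. -/
structure IsFreezingScheme {κ : Type*} [CommGroup T] (P : Subgroup T) (G : Subgroup (I → T))
    (i₀ : I) (R : Finset κ) (cls : I → κ) (ε : I → Finset κ) : Prop where
  const_mem : ∀ t, const I t ∈ G
  cls_mem : ∀ i, cls i = cls i₀ ∨ cls i ∈ R
  base_notMem : cls i₀ ∉ R
  vertex_disjoint : ∀ i, Disjoint (ε i) R
  vertex_base : ε i₀ = ∅
  vertex_nonempty : ∀ i, cls i = cls i₀ → i ≠ i₀ → (ε i).Nonempty
  cube : ∀ t : κ → P, ∃ g ∈ G, ∀ i, cls i = cls i₀ → g i = ∏ k ∈ ε i, (t k : T)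
  freeze : ∀ k ∈ R, ∀ t : P, ∃ g ∈ G,
    (∀ i, cls i = k → g i = 1) ∧ ∀ i, cls i = cls i₀ → g i = t

variable {κ : Type*} [CommGroup T] {P : Subgroup T} {G : Subgroup (I → T)} {i₀ : I}
  {R : Finset κ} {cls : I → κ} {ε : I → Finset κ}

theorem IsFreezingScheme.double [DecidableEq κ] {k : κ}
    (h : IsFreezingScheme P G i₀ (insert k R) cls ε)
    (hk : k ∉ R) (hi₀ : i₀ ∈ {i | cls i ≠ k}) :
    IsFreezingScheme P (double G {i | cls i ≠ k}) (Sum.inl ⟨i₀, hi₀⟩) R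
      (Sum.elim (fun i => cls i) fun i => cls i)
      (Sum.elim (fun i => ε i) fun i => insert k (ε i)) where
  const_mem t := ⟨const I t, h.const_mem t, const I t, h.const_mem t, eqOn_refl _ _,
    by ext (i | i) <;> rfl⟩
  cls_mem := by
    have (i : I) (hi : cls i ≠ k) : cls i = cls i₀ ∨ cls i ∈ R :=
      (h.cls_mem i).imp_right (Finset.mem_of_mem_insert_of_ne · hi)
    rintro (i | i) <;> exact this i i.2
  base_notMem hR := h.base_notMem (Finset.mem_insert_of_mem hR)
  vertex_disjoint := by
    have (i : I) : Disjoint (ε i) R :=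
      (h.vertex_disjoint i).mono_right (Finset.subset_insert k R)
    rintro (i | i)
    · exact this i
    · exact Finset.disjoint_insert_left.2 ⟨hk, this i⟩
  vertex_base := h.vertex_base
  vertex_nonempty := by
    rintro (i | i) hi hne
    · exact h.vertex_nonempty i hi fun hii₀ => hne (congrArg Sum.inl (Subtype.ext hii₀))
    · exact Finset.insert_nonempty k _
  cube t := by
    obtain ⟨g, hg, hgt⟩ := h.cube t
    obtain ⟨f, hf, hfk, hft⟩ := h.freeze k (Finset.mem_insert_self k R) (t k)
    refine ⟨_, ⟨g, hg, g * f, mul_mem hg hf, fun i hi => ?_, rfl⟩, ?_⟩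
    · simp [hfk i (not_not.1 hi)]
    · rintro (i | i) hi
      · exact hgt i hi
      · have hki : k ∉ ε i :=
          Finset.disjoint_right.1 (h.vertex_disjoint i) (Finset.mem_insert_self k R)
        have hgf : (g * f) i = ∏ j ∈ insert k (ε i), (t j : T) := by
          rw [Finset.prod_insert hki, Pi.mul_apply, hgt i hi, hft i hi, mul_comm]
        exact hgf
  freeze j hj t := by
    obtain ⟨g, hg, hgj, hgt⟩ := h.freeze j (Finset.mem_insert_of_mem hj) t
    refine ⟨_, ⟨g, hg, g, hg, eqOn_refl g _, rfl⟩, ?_, ?_⟩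
    · rintro (i | i) hi <;> exact hgj i hi
    · rintro (i | i) hi <;> exact hgt i hi

variable [TopologicalSpace X] [MulAction T X] [ContinuousConstSMul T X]

theorem IsFreezingScheme.update_const_mem_configurations [Finite I] [DecidableEq I]
    {x y : X} (h : IsFreezingScheme P G i₀ ∅ cls ε) (hxy : CubeProximal P κ x y) :
    update (const I x) i₀ y ∈ configurations X G := by
  have hcls (i : I) : cls i = cls i₀ := (h.cls_mem i).resolve_right (Finset.notMem_empty _)
  refine mem_closure_iff.2 fun O hO hxyO => ?_
  obtain ⟨V, hV, hVO⟩ := isOpen_pi_iff'.1 hO _ hxyO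
  have hU : (⋂ i : {i // i ≠ i₀}, V i) ∈ 𝓝 x :=
    iInter_mem.2 fun i => (hV i).1.mem_nhds (by simpa [i.2] using (hV i).2)
  obtain ⟨y', hy', t, ht⟩ := hxy _ hU (V i₀) ((hV i₀).1.mem_nhds (by simpa using (hV i₀).2))
  obtain ⟨g, hg, hgt⟩ := h.cube t
  refine ⟨g • const I y', hVO fun i _ => ?_, g, hg, y', rfl⟩
  rcases eq_or_ne i i₀ with rfl | hi
  · simpa [hgt i rfl, h.vertex_base] using hy'
  · have hmem := mem_iInter.1 (ht (ε i) (h.vertex_nonempty i (hcls i) hi)) ⟨i, hi⟩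
    simpa [hgt i (hcls i), Subgroup.smul_def] using hmem

variable [CompactSpace X] [T2Space X] [SecondCountableTopology X] [MulAction.IsMinimal T X]

theorem IsFreezingScheme.eventually_residual_exchangeable [Finite I] [DecidableEq I]
    (h : IsFreezingScheme P G i₀ R cls ε) :
    ∀ᶠ x in residual X, ∀ y, CubeProximal P κ x y → Exchangeable G i₀ x y := by
  classical
  induction R using Finset.induction_on generalizing I with
  | empty =>
    filter_upwards [eventually_residual_exchangeable_of_update_const_mem h.const_mem i₀]
      with x hx y hxy
    exact hx y (h.update_const_mem_configurations hxy)
  | insert k R hk ih =>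
    have hi₀ : i₀ ∈ {i | cls i ≠ k} := fun hi₀k =>
      h.base_notMem (hi₀k ▸ Finset.mem_insert_self k R)
    filter_upwards [ih (h.double hk hi₀),
      eventually_residual_exchangeable_of_double h.const_mem _ ⟨i₀, hi₀⟩] with x hx hdouble y hxy
    exact hdouble y (hx y hxy)

end Freezing

section ArithmeticProgressions

variable {I T X : Type*} [CommGroup T]

/-- The group of families `i ↦ s * t ^ w i`. For `w i = i` its orbits on constant families are the
arithmetic progressions. -/
def apGroup (T : Type*) [CommGroup T] (w : I → ℤ) : Subgroup (I → T) where
  carrier := {g | ∃ s t : T, g = fun i => s * t ^ w i}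
  one_mem' := ⟨1, 1, by ext; simp⟩
  mul_mem' := by
    rintro _ _ ⟨s, t, rfl⟩ ⟨s', t', rfl⟩
    exact ⟨s * s', t * t', by ext; simp [mul_zpow, mul_mul_mul_comm]⟩
  inv_mem' := by
    rintro _ ⟨s, t, rfl⟩
    exact ⟨s⁻¹, t⁻¹, by ext; simp [mul_comm]⟩

theorem const_mem_apGroup (w : I → ℤ) (t : T) : const I t ∈ apGroup T w :=
  ⟨t, 1, by ext; simp⟩

theorem exists_mem_apGroup_of_sub_dvd {w : I → ℤ} {i k : I} {c : ℤ} (hc : w i - w k ∣ c) (t : T) :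
    ∃ g ∈ apGroup T w, g k = 1 ∧ g i = t ^ c := by
  obtain ⟨u, rfl⟩ := hc
  refine ⟨_, ⟨t ^ (-w k * u), t ^ u, rfl⟩, ?_, ?_⟩
  · simp [← zpow_mul, mul_comm]
  · simp only [← zpow_mul, ← zpow_add]
    ring_nf

theorem isFreezingScheme_apGroup [Fintype I] [DecidableEq I] (w : I → ℤ) (i₀ : I) :
    IsFreezingScheme (powMonoidHom (∏ j ∈ Finset.univ.erase i₀, (w i₀ - w j).natAbs) : T →* T).range
      (apGroup T w) i₀ (Finset.univ.erase i₀) id fun _ => ∅ where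
  const_mem := const_mem_apGroup w
  cls_mem i := by simp [em]
  base_notMem := Finset.notMem_erase i₀ _
  vertex_disjoint _ := Finset.disjoint_empty_left _
  vertex_base := rfl
  vertex_nonempty i hi hne := absurd hi hne
  cube _ := ⟨1, one_mem _, by simp⟩
  freeze := by
    rintro k hk ⟨_, τ, rfl⟩
    obtain ⟨g, hg, hgk, hgi₀⟩ := exists_mem_apGroup_of_sub_dvd
      (Int.natAbs_dvd.1 (Int.natCast_dvd_natCast.2
        (Finset.dvd_prod_of_mem (fun j => (w i₀ - w j).natAbs) hk))) τ
    refine ⟨g, hg, ?_, ?_⟩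
    · rintro _ rfl
      exact hgk
    · rintro _ rfl
      exact hgi₀.trans (zpow_natCast τ _)

variable [TopologicalSpace X] [MulAction T X] [ContinuousConstSMul T X] [CompactSpace X]
  [T2Space X] [SecondCountableTopology X] [MulAction.IsMinimal T X]

theorem eventually_residual_exchangeable_apGroup [Finite I] [DecidableEq I]
    (hT : ∀ n : ℕ, n ≠ 0 → (powMonoidHom n : T →* T).range.FiniteIndex) {w : I → ℤ}
    (hw : Injective w) (i₀ : I) :
    ∀ᶠ x in residual X, ∀ y, (∀ d, 1 ≤ d → (x, y) ∈ RPrel (T := T) X d) →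
      Exchangeable (apGroup T w) i₀ x y := by
  have := Fintype.ofFinite I
  have hne : ∏ j ∈ Finset.univ.erase i₀, (w i₀ - w j).natAbs ≠ 0 :=
    Finset.prod_ne_zero_iff.2 fun j hj =>
      Int.natAbs_ne_zero.2 (sub_ne_zero.2 (hw.ne (Finset.ne_of_mem_erase hj).symm))
  have := hT _ hne
  filter_upwards [eventually_residual_cubeProximal_of_finiteIndex (X := X)
      (powMonoidHom (∏ j ∈ Finset.univ.erase i₀, (w i₀ - w j).natAbs) : T →* T).range I,
    (isFreezingScheme_apGroup (T := T) w i₀).eventually_residual_exchangeable] with x hx hexch y hxy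
  exact hexch y (hx y hxy)

end ArithmeticProgressions

section IndependentPairs

theorem ite_mem_configurations_of_exchangeable {I T X : Type*} [Group T] [TopologicalSpace X]
    [MulAction T X] [ContinuousConstSMul T X] [DecidableEq I] {G : Subgroup (I → T)} {x y : X}
    (h : ∀ i, Exchangeable G i x y) (s : Finset I) :
    (fun i => if i ∈ s then y else x) ∈ configurations X G := by
  induction s using Finset.induction_on with
  | empty => exact const_mem_configurations x
  | insert i s hi ih =>
    convert h i _ ih (if_neg hi) using 1
    ext j
    rcases eq_or_ne j i with rfl | hj
    · simp
    · simp [hj]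

/-- Exponents of consecutive blocks of length `d`, one for each word of length `d`, so that the
configurations of `apGroup T (blockWeight d)` record all words at once. The sign makes the common
difference of the progression the element `t` in the definition of an `Ind_ap`-pair. -/
noncomputable def blockWeight (d : ℕ) (e : (Fin d → Bool) × Fin d) : ℤ :=
  -(finProdFinEquiv (Fintype.equivFin (Fin d → Bool) e.1, e.2) : ℕ)

theorem blockWeight_injective (d : ℕ) : Injective (blockWeight d) := by
  rintro ⟨σ, i⟩ ⟨τ, j⟩ h
  have := finProdFinEquiv.injective (Fin.ext (Nat.cast_injective (neg_injective h)))
  simpa using this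

theorem blockWeight_add (d : ℕ) (σ : Fin d → Bool) (j : Fin d) :
    blockWeight d (σ, j) + j = -(d * Fintype.equivFin (Fin d → Bool) σ : ℕ) := by
  simp [blockWeight]

variable {T X : Type*} [CommGroup T] [TopologicalSpace X] [MulAction T X] [ContinuousConstSMul T X]

theorem exists_smul_mem_of_exchangeable {d : ℕ} {x y : X}
    (h : ∀ e, Exchangeable (apGroup T (blockWeight d)) e x y) {U V : Set X} (hU : U ∈ 𝓝 x)
    (hV : V ∈ 𝓝 y) :
    ∃ s t : T, ∃ z : X, ∀ σ j,
      (s * t ^ blockWeight d (σ, j)) • z ∈ if σ j then U else V := by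
  obtain ⟨_, hmem, _, ⟨s, t, rfl⟩, z, rfl⟩ := mem_closure_iff_nhds.1
    (ite_mem_configurations_of_exchangeable h {e | e.1 e.2 = false})
    (univ.pi fun e => if e.1 e.2 then U else V)
    (set_pi_mem_nhds finite_univ fun e _ => by cases he : e.1 e.2 <;> simpa [he])
  exact ⟨s, t, z, fun σ j => hmem (σ, j) (mem_univ _)⟩

theorem isIndApPair_of_exchangeable [T2Space X] {x y : X} (hne : x ≠ y)
    (h : ∀ d e, Exchangeable (apGroup T (blockWeight d)) e x y) : IsIndApPair T x y := by
  intro d hd U hU V hV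
  obtain ⟨A, B, hA, hB, hxA, hyB, hAB⟩ := t2_separation hne
  obtain ⟨s, t, z, hz⟩ := exists_smul_mem_of_exchangeable (h d)
    (inter_mem hU (hA.mem_nhds hxA)) (inter_mem hV (hB.mem_nhds hyB))
  refine ⟨t, ?_, fun σ => ⟨(s * t ^ (1 - d * Fintype.equivFin (Fin d → Bool) σ : ℤ)) • z,
    mem_iInter.2 fun j => ⟨(s * t ^ blockWeight d (σ, j)) • z, ?_, ?_⟩⟩⟩
  · rintro rfl
    have hzA := hz (fun _ => true) ⟨0, hd⟩
    have hzB := hz (fun _ => false) ⟨0, hd⟩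
    simp only [one_zpow, if_true, Bool.false_eq_true, if_false] at hzA hzB
    exact disjoint_left.1 hAB hzA.2 hzB.2
  · have := hz σ j
    split_ifs at this ⊢ <;> exact this.1
  · change t ^ ((j : ℕ) + 1) • (s * t ^ blockWeight d (σ, j)) • z = _
    have hexp : (j + 1 : ℕ) + blockWeight d (σ, j) =
        1 - d * Fintype.equivFin (Fin d → Bool) σ := by
      have := blockWeight_add d σ j
      push_cast at this ⊢
      linarith
    rw [smul_smul, mul_left_comm, ← zpow_natCast, ← zpow_add, hexp]

end IndependentPairs

theorem isGδ_setOf_preimage_eq_singleton {X Y : Type*} [TopologicalSpace X] [CompactSpace X]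
    [T2Space X] [SecondCountableTopology X] [TopologicalSpace Y] [T2Space Y] {f : X → Y}
    (hf : Continuous f) : IsGδ {x : X | f ⁻¹' {f x} = {x}} := by
  obtain ⟨W, hW, hdiag⟩ := (isClosed_diagonal (X := X)).isGδ.eq_iInter_nat
  have heq : {x : X | f ⁻¹' {f x} = {x}} =
      ⋂ n, (Prod.fst '' ({p : X × X | f p.1 = f p.2} ∩ (W n)ᶜ))ᶜ := by
    ext x
    suffices f ⁻¹' {f x} = {x} ↔ ∀ n y, f x = f y → (x, y) ∈ W n by simpa [imp_not_comm]
    calc f ⁻¹' {f x} = {x} ↔ ∀ y, f x = f y → (x, y) ∈ diagonal X := by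
          simp [eq_singleton_iff_unique_mem, eq_comm (a := f x), eq_comm (a := x)]
      _ ↔ ∀ n y, f x = f y → (x, y) ∈ W n := by
          simp only [hdiag, mem_iInter]
          tauto
  rw [heq]
  refine .iInter_of_isOpen fun n => IsClosed.isOpen_compl (self := ?_)
  exact isClosedMap_fst_of_compactSpace _
    ((isClosed_eq (by fun_prop) (by fun_prop)).inter (hW n).isClosed_compl)

end IndAp

theorem no_IndAp_pairs_implies_almost_one_to_one_general
    {T X Y : Type*} [CommGroup T]
    (hT : ∀ n : ℕ, n ≠ 0 → (powMonoidHom n : T →* T).range.FiniteIndex)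
    [TopologicalSpace X] [CompactSpace X] [T2Space X] [SecondCountableTopology X]
    [MulAction T X] [ContinuousConstSMul T X] [MulAction.IsMinimal T X]
    [TopologicalSpace Y] [T2Space Y]
    (π : X → Y) (hπc : Continuous π)
    (hfib : ∀ x x' : X, π x = π x' → ∀ d : ℕ, 1 ≤ d → (x, x') ∈ RPrel (T := T) X d)
    (hnoind : ∀ x₁ x₂ : X, IsIndApPair T x₁ x₂ → x₁ = x₂) :
    Dense {x : X | π ⁻¹' {π x} = {x}} ∧ IsGδ {x : X | π ⁻¹' {π x} = {x}} := by
  refine ⟨dense_of_mem_residual ?_, IndAp.isGδ_setOf_preimage_eq_singleton hπc⟩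
  have hexch : ∀ᶠ x in residual X, ∀ d e y, (∀ n, 1 ≤ n → (x, y) ∈ RPrel (T := T) X n) →
      IndAp.Exchangeable (IndAp.apGroup T (IndAp.blockWeight d)) e x y :=
    eventually_countable_forall.2 fun d => eventually_countable_forall.2 fun e =>
      IndAp.eventually_residual_exchangeable_apGroup hT (IndAp.blockWeight_injective d) e
  filter_upwards [hexch] with x hx
  refine eq_singleton_iff_unique_mem.2 ⟨rfl, fun y (hy : π y = π x) => ?_⟩
  by_contra hne
  exact hne (hnoind x y (IndAp.isIndApPair_of_exchangeable (Ne.symm hne)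
    fun d e => hx d e y (hfib x y hy.symm))).symm

/-- A minimal metric system with finitely generated abelian acting group and no
nontrivial `Ind_ap`-pairs is an almost one-to-one extension of its maximal factor
of order `∞` (any factor `π : X → Y` whose fibers are exactly the `RP^[∞]`-classes). -/
theorem no_IndAp_pairs_implies_almost_one_to_one
    {T X Y : Type*} [CommGroup T] [Group.FG T]
    [MetricSpace X] [CompactSpace X] [MulAction T X]
    [MetricSpace Y] [CompactSpace Y] [MulAction T Y]
    (hcX : ∀ t : T, Continuous fun x : X => t • x)
    (hcY : ∀ t : T, Continuous fun y : Y => t • y)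
    (hminX : ∀ x : X, Dense {x' : X | ∃ t : T, x' = t • x})
    (hminY : ∀ y : Y, Dense {y' : Y | ∃ t : T, y' = t • y})
    (π : X → Y) (hπc : Continuous π) (hπs : Function.Surjective π)
    (hπeq : ∀ t : T, ∀ x : X, π (t • x) = t • π x)
    (hfib : ∀ x x' : X, π x = π x' ↔ ∀ d : ℕ, 1 ≤ d → (x, x') ∈ RPrel (T := T) X d)
    (hnoind : ∀ x₁ x₂ : X, IsIndApPair T x₁ x₂ → x₁ = x₂) :
    Dense {x : X | π ⁻¹' {π x} = {x}} ∧ IsGδ {x : X | π ⁻¹' {π x} = {x}} := by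
  have : ContinuousConstSMul T X := ⟨hcX⟩
  have : MulAction.IsMinimal T X := ⟨fun x => (hminX x).mono (by
    rintro _ ⟨t, rfl⟩
    exact ⟨t, rfl⟩)⟩
  exact no_IndAp_pairs_implies_almost_one_to_one_general
    (fun _ => Subgroup.finiteIndex_range_powMonoidHom_of_fg T) π hπc (fun x x' => (hfib x x').1)
    hnoind
end
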